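/- Let Σ be a non-singular fan in ℝ^n satisfying conditions (2.9.1) and (2.9.2) (so that X_Σ = U(K_Σ)/G_Σ is simply connected), and let D = (d_1,…,d_r) be an r-tuple of positive integers with ∑_k d_k n_k = 0. Then the map i_D : Pol*_D(S¹,X_Σ) → ΩX_Σ admits a continuous lift j_D : Pol*_D(S¹,X_Σ) → ΩU(K_Σ) with (Ωq_Σ) ∘ j_D = i_D, and every such lift j_D is a homotopy equivalence through dimension d(D,Σ) = 2(r_min(Σ)−1)·d_min − 2. -/

import Mathlib

open scoped BigOperators
attribute [local instance] Classical.propDecidable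

noncomputable section

namespace Toric


/-! ### Cones and fans -/

/-- The real vector associated to an integer vector. -/
def zr {n : ℕ} (v : Fin n → ℤ) : Fin n → ℝ := fun i => (v i : ℝ)

/-- A convex rational polyhedral cone in `ℝ^n`. -/
def IsRatCone {n : ℕ} (σ : Set (Fin n → ℝ)) : Prop :=
  ∃ s : Finset (Fin n → ℤ),
    σ = {x | ∃ lam : (Fin n → ℤ) → ℝ, (∀ v, 0 ≤ lam v) ∧ x = ∑ v ∈ s, lam v • zr v}

/-- A cone is strongly convex if `σ ∩ (-σ) = {0}`. -/
def StronglyConvex {n : ℕ} (σ : Set (Fin n → ℝ)) : Prop := σ ∩ (-σ) = {0}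

/-- `τ` is a face of `σ`, cut out by a linear form nonnegative on `σ`. -/
def IsFaceOf {n : ℕ} (τ σ : Set (Fin n → ℝ)) : Prop :=
  ∃ L : (Fin n → ℝ) →ₗ[ℝ] ℝ, (∀ x ∈ σ, 0 ≤ L x) ∧ τ = σ ∩ {x | L x = 0}

/-- A fan in `ℝ^n`: a finite collection of strongly convex rational polyhedral cones,
closed under taking faces, such that the intersection of two cones is a face of each;
we also require that it strictly contains `{0}`. -/
structure Fan (n : ℕ) where
  cones : Set (Set (Fin n → ℝ))
  finite : cones.Finite
  ratCone : ∀ σ ∈ cones, IsRatCone σ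
  stronglyConvex : ∀ σ ∈ cones, StronglyConvex σ
  face_mem : ∀ σ ∈ cones, ∀ τ, IsFaceOf τ σ → τ ∈ cones
  inter_face : ∀ σ ∈ cones, ∀ τ ∈ cones, IsFaceOf (σ ∩ τ) σ
  zero_mem : ({0} : Set (Fin n → ℝ)) ∈ cones
  nontrivial : cones ≠ {({0} : Set (Fin n → ℝ))}

/-- A fan is complete if its cones cover `ℝ^n`. -/
def Fan.Complete {n : ℕ} (F : Fan n) : Prop := ⋃₀ F.cones = Set.univ

/-- A fan is non-singular if each of its cones is spanned by part of a `ℤ`-basis of `ℤ^n`. -/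
def Fan.NonSingular {n : ℕ} (F : Fan n) : Prop :=
  ∀ σ ∈ F.cones, ∃ (b : Module.Basis (Fin n) ℤ (Fin n → ℤ)) (s : Finset (Fin n)),
    σ = {x | ∃ lam : Fin n → ℝ, (∀ i, 0 ≤ lam i) ∧ x = ∑ i ∈ s, lam i • zr (b i)}

/-- The ray (one-dimensional cone) generated by a vector. -/
def ray {n : ℕ} (v : Fin n → ℝ) : Set (Fin n → ℝ) := {x | ∃ t : ℝ, 0 ≤ t ∧ x = t • v}

/-- The cone spanned by the vectors `n_i`, `i ∈ s`. -/
def coneIdx {n r : ℕ} (N : Fin r → Fin n → ℤ) (s : Finset (Fin r)) : Set (Fin n → ℝ) :=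
  {x | ∃ lam : Fin r → ℝ, (∀ i, 0 ≤ lam i) ∧ x = ∑ i ∈ s, lam i • zr (N i)}

/-- A point of `ℝ^n` lying in the lattice `ℤ^n`. -/
def IsLatticePoint {n : ℕ} (x : Fin n → ℝ) : Prop := ∀ i, ∃ m : ℤ, x i = (m : ℝ)

/-- `N 1, …, N r` is the (complete, repetition-free) list of primitive generators of the
one-dimensional cones of the fan `F`. -/
structure IsPrimGens {n r : ℕ} (F : Fan n) (N : Fin r → Fin n → ℤ) : Prop where
  ray_mem : ∀ k, ray (zr (N k)) ∈ F.cones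
  ne_zero : ∀ k, N k ≠ 0
  primitive : ∀ k, ray (zr (N k)) ∩ {x | IsLatticePoint x}
      = {x | ∃ c : ℕ, x = (c : ℝ) • zr (N k)}
  inj : Function.Injective N
  complete : ∀ σ ∈ F.cones, Module.finrank ℝ (Submodule.span ℝ σ) = 1 →
      ∃ k, σ = ray (zr (N k))

/-- Condition (2.9.1): a positive integral relation among the primitive generators. -/
def Cond1 {n r : ℕ} (N : Fin r → Fin n → ℤ) : Prop :=
  ∃ d : Fin r → ℕ, (∀ k, 0 < d k) ∧ ∑ k, (d k : ℤ) • N k = 0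

/-- Condition (2.9.2): the primitive generators span `ℤ^n` over `ℤ`. -/
def Cond2 {n r : ℕ} (N : Fin r → Fin n → ℤ) : Prop :=
  Submodule.span ℤ (Set.range N) = ⊤

/-- The underlying simplicial complex `K_Σ` of a fan. -/
def KC {n r : ℕ} (F : Fan n) (N : Fin r → Fin n → ℤ) : Set (Finset (Fin r)) :=
  {s | coneIdx N s ∈ F.cones}

/-- A primitive set: it spans no cone of the fan, but every proper subset does. -/
def PrimitiveSet {r : ℕ} (K : Set (Finset (Fin r))) (s : Finset (Fin r)) : Prop :=
  s ∉ K ∧ ∀ t ⊂ s, t ∈ K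

/-- `r_min`: the minimal cardinality of a primitive set. -/
def rmin {r : ℕ} (K : Set (Finset (Fin r))) : ℕ :=
  sInf {m | ∃ s : Finset (Fin r), PrimitiveSet K s ∧ s.card = m}

/-- `d_min = min {d_1, …, d_r}`. -/
def dmin {r : ℕ} (D : Fin r → ℕ) : ℕ := sInf (Set.range D)

/-- The stability dimension `d(D,Σ) = 2(r_min − 1) d_min − 2`. -/
def dBound {r : ℕ} (K : Set (Finset (Fin r))) (D : Fin r → ℕ) : ℤ :=
  2 * ((rmin K : ℤ) - 1) * (dmin D : ℤ) - 2

/-- The connectivity bound `C_D(Σ) = 2(r_min − 1) d_min − 1`. -/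
def CBound {r : ℕ} (K : Set (Finset (Fin r))) (D : Fin r → ℕ) : ℤ :=
  2 * ((rmin K : ℤ) - 1) * (dmin D : ℤ) - 1

/-! ### Coordinate subspaces, `U(K)`, `G_Σ` and the toric quotient -/

/-- The coordinate subspace `L_σ ⊆ ℂ^r`. -/
def LSub {r : ℕ} (σ : Finset (Fin r)) : Set (Fin r → ℂ) := {x | ∀ i ∈ σ, x i = 0}

/-- The complement `U(K)` of the coordinate subspace arrangement of type `K`. -/
def UK {r : ℕ} (K : Set (Finset (Fin r))) : Set (Fin r → ℂ) :=
  (⋃ σ ∈ {s : Finset (Fin r) | s ∉ K}, LSub σ)ᶜ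

lemma mem_UK {r : ℕ} {K : Set (Finset (Fin r))} {x : Fin r → ℂ} :
    x ∈ UK K ↔ ∀ σ : Finset (Fin r), σ ∉ K → ∃ i ∈ σ, x i ≠ 0 := by
  constructor
  · intro h σ hσ
    by_contra hc
    push_neg at hc
    exact h (Set.mem_biUnion hσ (fun i hi => hc i hi))
  · intro h hx
    rcases Set.mem_iUnion₂.1 hx with ⟨σ, hσ, hxσ⟩
    rcases h σ hσ with ⟨i, hi, hne⟩
    exact hne (hxσ i hi)

/-- The group `G_Σ` (as a subset of `ℂ^r`). -/
def GSet {n r : ℕ} (N : Fin r → Fin n → ℤ) : Set (Fin r → ℂ) :=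
  {μ | (∀ k, μ k ≠ 0) ∧ ∀ m : Fin n → ℤ, ∏ k, μ k ^ (∑ j, N k j * m j) = 1}

/-- The orbit relation of the `G_Σ`-action on `U(K_Σ)`. -/
def toricRel {n r : ℕ} (N : Fin r → Fin n → ℤ) (K : Set (Finset (Fin r)))
    (x y : ↥(UK K)) : Prop :=
  ∃ μ ∈ GSet N, (fun i => μ i * (x : Fin r → ℂ) i) = (y : Fin r → ℂ)

/-- The toric variety `X_Σ = U(K_Σ)/G_Σ`, as a topological quotient. -/
def XS {n r : ℕ} (N : Fin r → Fin n → ℤ) (K : Set (Finset (Fin r))) : Type :=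
  Quot (toricRel N K)

instance {n r : ℕ} (N : Fin r → Fin n → ℤ) (K : Set (Finset (Fin r))) :
    TopologicalSpace (XS N K) :=
  instTopologicalSpaceQuot

/-- The quotient map `q_Σ : U(K_Σ) → X_Σ`. -/
def qmap {n r : ℕ} (N : Fin r → Fin n → ℤ) (K : Set (Finset (Fin r))) :
    ↥(UK K) → XS N K :=
  Quot.mk (toricRel N K)

/-- `q_Σ` as a continuous map. -/
def qCont {n r : ℕ} (N : Fin r → Fin n → ℤ) (K : Set (Finset (Fin r))) :
    C(↥(UK K), XS N K) :=
  ⟨qmap N K, continuous_quot_mk⟩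

lemma coneIdx_empty {n r : ℕ} (N : Fin r → Fin n → ℤ) :
    coneIdx N (∅ : Finset (Fin r)) = ({0} : Set (Fin n → ℝ)) := by
  ext x
  constructor
  · rintro ⟨lam, -, hx⟩
    simpa using hx
  · intro hx
    exact ⟨0, fun i => le_refl 0, by simpa using hx⟩

lemma empty_mem_KC {n r : ℕ} (F : Fan n) (N : Fin r → Fin n → ℤ) :
    (∅ : Finset (Fin r)) ∈ KC F N := by
  show coneIdx N ∅ ∈ F.cones
  rw [coneIdx_empty]
  exact F.zero_mem

/-- The point `(1,…,1)`. -/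
def onesC {r : ℕ} : Fin r → ℂ := fun _ => 1

lemma ones_mem_UK {r : ℕ} {K : Set (Finset (Fin r))} (h : (∅ : Finset (Fin r)) ∈ K) :
    (onesC : Fin r → ℂ) ∈ UK K := by
  rw [mem_UK]
  intro σ hσ
  rcases Finset.nonempty_iff_ne_empty.2 (fun he : σ = ∅ => hσ (by rw [he]; exact h)) with ⟨i, hi⟩
  exact ⟨i, hi, one_ne_zero⟩

/-- The base point `(1,…,1)` of `U(K_Σ)`. -/
def onesUK {r : ℕ} {K : Set (Finset (Fin r))} (h : (∅ : Finset (Fin r)) ∈ K) : ↥(UK K) :=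
  ⟨onesC, ones_mem_UK h⟩

/-- The base point `[1,…,1]` of `X_Σ`. -/
def baseX {n r : ℕ} (N : Fin r → Fin n → ℤ) (K : Set (Finset (Fin r)))
    (h : (∅ : Finset (Fin r)) ∈ K) : XS N K :=
  qmap N K (onesUK h)



/-! ### Spaces of tuples of monic polynomials -/

/-- The monic polynomial `z^d + a_{d-1} z^{d-1} + ⋯ + a_0` with coefficient data `a`. -/
def toPoly {d : ℕ} (a : Fin d → ℂ) : Polynomial ℂ :=
  Polynomial.X ^ d + ∑ i : Fin d, Polynomial.C (a i) * Polynomial.X ^ (i : ℕ)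

/-- The space `Pol*_D(S¹, X_Σ)` of `r`-tuples of monic polynomials of multidegree `D`
(in coefficient coordinates) such that for every `σ ∉ K` the polynomials `{f_i : i ∈ σ}`
have no common real root. -/
def PolSp {r : ℕ} (K : Set (Finset (Fin r))) (D : Fin r → ℕ) :
    Set (∀ k : Fin r, Fin (D k) → ℂ) :=
  {f | ∀ σ : Finset (Fin r), σ ∉ K → ∀ t : ℝ,
        ∃ k ∈ σ, (toPoly (f k)).eval (t : ℂ) ≠ 0}

lemma polEval_mem_UK {r : ℕ} {K : Set (Finset (Fin r))} {D : Fin r → ℕ}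
    (f : ↥(PolSp K D)) (t : ℝ) :
    (fun k => (toPoly (f.1 k)).eval (t : ℂ)) ∈ UK K :=
  mem_UK.2 fun σ hσ => f.2 σ hσ t

/-! ### Loop spaces and induced maps on homotopy groups -/

/-- The loop space `Ω X = Map*(S¹, X)` with `S¹ = ℝ ∪ {∞}` (the one-point
compactification of `ℝ`), based at `x₀`. -/
def Loop (X : Type*) [TopologicalSpace X] (x₀ : X) : Type _ :=
  {γ : C(OnePoint ℝ, X) // γ OnePoint.infty = x₀}

instance {X : Type*} [TopologicalSpace X] (x₀ : X) : TopologicalSpace (Loop X x₀) :=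
  instTopologicalSpaceSubtype

/-- The constant loop, base point of `Ω X`. -/
def Loop.const {X : Type*} [TopologicalSpace X] (x₀ : X) : Loop X x₀ :=
  ⟨ContinuousMap.const _ x₀, rfl⟩

/-- A based continuous map induces a continuous map of loop spaces. -/
def loopMap {X Y : Type*} [TopologicalSpace X] [TopologicalSpace Y] {x₀ : X} {y₀ : Y}
    (f : C(X, Y)) (hf : f x₀ = y₀) : C(Loop X x₀, Loop Y y₀) where
  toFun γ := ⟨f.comp γ.1, by simp [γ.2, hf]⟩
  continuous_toFun := by
    apply Continuous.subtype_mk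
    exact (ContinuousMap.continuous_postcomp f).comp continuous_subtype_val

/-- The map induced by a continuous map on homotopy groups (`π_q`). -/
def piMap (q : ℕ) {X Y : Type*} [TopologicalSpace X] [TopologicalSpace Y]
    (f : C(X, Y)) (x : X) :
    HomotopyGroup (Fin q) X x → HomotopyGroup (Fin q) Y (f x) :=
  Quotient.map
    (fun p => ⟨f.comp p.1, fun y hy => by
      show f (p.1 y) = f x
      rw [p.2 y hy]⟩)
    (fun p₁ p₂ h => h.elim fun H => ⟨H.compContinuousMap f⟩)

/-- `f` is a homotopy equivalence through dimension `d`: it induces isomorphisms on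
`π_k` for all `k ≤ d` (at every base point). -/
def HomotopyEquivThrough {X Y : Type*} [TopologicalSpace X] [TopologicalSpace Y]
    (f : C(X, Y)) (d : ℤ) : Prop :=
  ∀ (x : X) (k : ℕ), (k : ℤ) ≤ d → Function.Bijective (piMap k f x)

/-- A genuine homotopy equivalence. -/
def IsHtpyEquiv {X Y : Type*} [TopologicalSpace X] [TopologicalSpace Y]
    (f : C(X, Y)) : Prop :=
  ∃ g : C(Y, X), (f.comp g).Homotopic (ContinuousMap.id Y) ∧
    (g.comp f).Homotopic (ContinuousMap.id X)

/-! ### `i_D`, lifts, and stabilization maps -/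

/-- `j : Pol*_D → Ω U(K_Σ)` is a lift of `i_D` through `Ω q_Σ`, i.e. `Ω q_Σ ∘ j = i_D`:
for every tuple `f` and real `t`, the loop `j f` at time `t` lies over the point
`[f_1(t), …, f_r(t)]` of `X_Σ` (and at `∞` over `[1,…,1]`, automatically). -/
def IsLiftOfID {n r : ℕ} (N : Fin r → Fin n → ℤ) (K : Set (Finset (Fin r)))
    (hE : (∅ : Finset (Fin r)) ∈ K) (D : Fin r → ℕ)
    (j : ↥(PolSp K D) → Loop ↥(UK K) (onesUK hE)) : Prop :=
  ∀ (f : ↥(PolSp K D)) (t : ℝ),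
    qmap N K ((j f).1 (t : OnePoint ℝ)) =
      qmap N K ⟨fun k => (toPoly (f.1 k)).eval (t : ℂ), polEval_mem_UK f t⟩

/-- `i : Pol*_D → Ω X_Σ` is the map `i_D` given by evaluation. -/
def IsID {n r : ℕ} (N : Fin r → Fin n → ℤ) (K : Set (Finset (Fin r)))
    (hE : (∅ : Finset (Fin r)) ∈ K) (D : Fin r → ℕ)
    (i : ↥(PolSp K D) → Loop (XS N K) (baseX N K hE)) : Prop :=
  ∀ (f : ↥(PolSp K D)) (t : ℝ),
    (i f).1 (t : OnePoint ℝ) =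
      qmap N K ⟨fun k => (toPoly (f.1 k)).eval (t : ℂ), polEval_mem_UK f t⟩

/-- `φ` is an admissible parameter for the stabilization maps: a homeomorphism of `ℂ`
onto the half plane `{Re < bound}` carrying `ℝ` onto `(-∞, bound)`. -/
def AdmissiblePhi (bound : ℝ) (φ : ℂ → ℂ) : Prop :=
  Continuous φ ∧ Function.Injective φ ∧ IsOpenMap φ ∧
    Set.range φ = {w : ℂ | w.re < bound} ∧
    φ '' {z : ℂ | z.im = 0} = {z : ℂ | z.im = 0 ∧ z.re < bound}

/-- The defining property of the stabilization map
`s_{D,D'}(f)_k = φ(f_k) · (z - x_k)^{d'_k - d_k}`, where `φ(f)` denotes the monic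
polynomial whose roots are the images under `φ` of the roots of `f`. -/
def StabSpec {r : ℕ} (K : Set (Finset (Fin r))) (φ : ℂ → ℂ) (xpt : Fin r → ℂ)
    (D D' : Fin r → ℕ) (s : ↥(PolSp K D) → ↥(PolSp K D')) : Prop :=
  ∀ (f : ↥(PolSp K D)) (k : Fin r),
    toPoly ((s f).1 k) =
      (((toPoly (f.1 k)).roots.map φ).map
        fun α => Polynomial.X - Polynomial.C α).prod
        * (Polynomial.X - Polynomial.C (xpt k)) ^ (D' k - D k)

/-- The general defining property of the map `j_D : Pol*_D → Ω U(K_Σ)`: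
when `∑ d_k n_k = 0` it is a lift of `i_D` through `Ω q_Σ`, and otherwise it is the
composite `j_{D₀} ∘ s_{D,D₀}` for a suitable `D₀ = m₀ D*` as in condition (2.9.1). -/
def IsJD {n r : ℕ} (N : Fin r → Fin n → ℤ) (K : Set (Finset (Fin r)))
    (hE : (∅ : Finset (Fin r)) ∈ K) (D : Fin r → ℕ)
    (j : C(↥(PolSp K D), Loop ↥(UK K) (onesUK hE))) : Prop :=
  ((∑ k, (D k : ℤ) • N k = 0) ∧ IsLiftOfID N K hE D j) ∨
  ((∑ k, (D k : ℤ) • N k ≠ 0) ∧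
    ∃ (dstar : Fin r → ℕ) (m₀ : ℕ),
      (∀ k, 0 < dstar k) ∧ (∑ k, (dstar k : ℤ) • N k = 0) ∧
      (∀ k, D k < m₀ * dstar k) ∧
      ∃ (φ : ℂ → ℂ) (xpt : Fin r → ℂ),
        AdmissiblePhi ((∑ k, D k : ℕ) : ℝ) φ ∧
        (∀ k, ((∑ k, D k : ℕ) : ℝ) < (xpt k).re) ∧ Function.Injective xpt ∧
        ∃ (j₀ : C(↥(PolSp K fun k => m₀ * dstar k), Loop ↥(UK K) (onesUK hE)))
          (s₀ : C(↥(PolSp K D), ↥(PolSp K fun k => m₀ * dstar k))),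
          IsLiftOfID N K hE _ j₀ ∧ StabSpec K φ xpt D _ s₀ ∧ j = j₀.comp s₀)

/-! ### Stabilized (colimit) spaces -/

/-- The multidegree `D + t·e`. -/
def Dt {r : ℕ} (D : Fin r → ℕ) (t : ℕ) : Fin r → ℕ := fun k => D k + t

/-- Carrier of the stabilized space: the disjoint union of the `Pol*_{D+te}`. -/
def ColCar {r : ℕ} (K : Set (Finset (Fin r))) (D : Fin r → ℕ) : Type :=
  Σ t : ℕ, ↥(PolSp K (Dt D t))

instance {r : ℕ} (K : Set (Finset (Fin r))) (D : Fin r → ℕ) :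
    TopologicalSpace (ColCar K D) := by
  unfold ColCar; infer_instance

/-- The identifications generating the colimit along the stabilization maps. -/
def ColRel {r : ℕ} (K : Set (Finset (Fin r))) (D : Fin r → ℕ)
    (s : ∀ t : ℕ, ↥(PolSp K (Dt D t)) → ↥(PolSp K (Dt D (t + 1)))) :
    ColCar K D → ColCar K D → Prop :=
  fun a b => b = ⟨a.1 + 1, s a.1 a.2⟩

/-- The stabilized space `Pol^Σ_{D+∞} = colim_t Pol*_{D+te}(S¹, X_Σ)`. -/
def PolColim {r : ℕ} (K : Set (Finset (Fin r))) (D : Fin r → ℕ)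
    (s : ∀ t : ℕ, ↥(PolSp K (Dt D t)) → ↥(PolSp K (Dt D (t + 1)))) : Type :=
  Quot (ColRel K D s)

instance {r : ℕ} (K : Set (Finset (Fin r))) (D : Fin r → ℕ)
    (s : ∀ t : ℕ, ↥(PolSp K (Dt D t)) → ↥(PolSp K (Dt D (t + 1)))) :
    TopologicalSpace (PolColim K D s) :=
  instTopologicalSpaceQuot

/-- Admissibility of a family of stabilization maps `s_{D+te}`. -/
def AdmissibleStabFamily {r : ℕ} (K : Set (Finset (Fin r))) (D : Fin r → ℕ)
    (s : ∀ t : ℕ, ↥(PolSp K (Dt D t)) → ↥(PolSp K (Dt D (t + 1)))) : Prop :=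
  ∀ t : ℕ, ∃ (φ : ℂ → ℂ) (xpt : Fin r → ℂ),
    AdmissiblePhi ((∑ k, Dt D t k : ℕ) : ℝ) φ ∧
    (∀ k, ((∑ k, Dt D t k : ℕ) : ℝ) < (xpt k).re) ∧ Function.Injective xpt ∧
    StabSpec K φ xpt (Dt D t) (Dt D (t + 1)) (s t)


/-! ### The abstract real deformation theorem -/

/-- Data for the abstract real deformation theorem: real coordinates indexed by `ι`, a time
interval `[A, B]`, finite-dimensional affine spaces of functions `e i + span (φ i)` with the
interpolation property, and forbidden coordinate subspaces given by `NF`. -/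
structure CoreData (ι : Type) [Fintype ι] where
  D : ι → ℕ
  e : ι → ℝ → ℝ
  φ : (i : ι) → Fin (D i) → ℝ → ℝ
  A : ℝ
  B : ℝ
  hAB : A < B
  NF : Set (Finset ι)
  d : ℕ
  ρ : ℕ
  e_smooth : ∀ i, ContDiff ℝ 1 (e i)
  φ_smooth : ∀ i l, ContDiff ℝ 1 (φ i l)
  φA : ∀ i l, φ i l A = 0
  φB : ∀ i l, φ i l B = 0
  interp : ∀ (i : ι) (S : Finset ℝ), (∀ t ∈ S, A < t ∧ t < B) → S.card ≤ d →
    ∀ y : ℝ → ℝ, ∃ w : Fin (D i) → ℝ, ∀ t ∈ S, ∑ l, w l * φ i l t = y t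
  card_NF : ∀ ν ∈ NF, ρ ≤ ν.card
  pA : ι → ℝ
  pB : ι → ℝ
  eA : ∀ i, e i A = pA i
  eB : ∀ i, e i B = pB i
  endA : ∀ ν ∈ NF, ∀ i ∈ ν, ∃ j ∈ ν, j ≠ i ∧ pA j ≠ 0
  endB : ∀ ν ∈ NF, ∀ i ∈ ν, ∃ j ∈ ν, j ≠ i ∧ pB j ≠ 0

namespace CoreData

variable {ι : Type} [Fintype ι] (C : CoreData ι)

/-- The function with coefficients `w`. -/
def ev (i : ι) (w : Fin (C.D i) → ℝ) (t : ℝ) : ℝ := ∑ l, w l * C.φ i l t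

/-- Coefficient space. -/
abbrev P : Type := (i : ι) → Fin (C.D i) → ℝ

lemma ev_add (i : ι) (w w' : Fin (C.D i) → ℝ) (t : ℝ) :
    C.ev i (w + w') t = C.ev i w t + C.ev i w' t := by
  simp [ev, add_mul, Finset.sum_add_distrib]

lemma ev_smul (i : ι) (a : ℝ) (w : Fin (C.D i) → ℝ) (t : ℝ) :
    C.ev i (a • w) t = a * C.ev i w t := by
  simp [ev, Finset.mul_sum, mul_assoc]

lemma ev_A (i : ι) (w : Fin (C.D i) → ℝ) : C.ev i w C.A = 0 := by simp [ev, C.φA]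
lemma ev_B (i : ι) (w : Fin (C.D i) → ℝ) : C.ev i w C.B = 0 := by simp [ev, C.φB]

lemma contDiff_ev (i : ι) :
    ContDiff ℝ 1 (fun p : (Fin (C.D i) → ℝ) × ℝ => C.ev i p.1 p.2) := by
  unfold ev
  refine ContDiff.sum fun l _ => ContDiff.mul ?_ ((C.φ_smooth i l).comp contDiff_snd)
  exact (contDiff_apply ℝ ℝ l).comp contDiff_fst

lemma continuous_ev (i : ι) :
    Continuous (fun p : (Fin (C.D i) → ℝ) × ℝ => C.ev i p.1 p.2) := (C.contDiff_ev i).continuous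

section generic
variable {E : Type} [NormedAddCommGroup E] [NormedSpace ℝ E] [FiniteDimensional ℝ E]

/-- The index set of constraints. -/
abbrev Kap (ν : Fin C.d → Finset ι) (i : ι) : Type :=
  {p : Fin C.d × ι // p.2 ∈ ν p.1 ∧ p.2 ≠ i}

/-- The linear evaluation map at the times `t`. -/
def Lmap (ν : Fin C.d → Finset ι) (i : ι) (t : Fin C.d → ℝ) : C.P →L[ℝ] (C.Kap ν i → ℝ) :=
  LinearMap.toContinuousLinearMap
    { toFun := fun c p => C.ev p.1.2 (c p.1.2) (t p.1.1)
      map_add' := by intro c c'; ext p; simp [ev_add]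
      map_smul' := by intro a c; ext p; simp [ev_smul] }

@[simp] lemma Lmap_apply (ν : Fin C.d → Finset ι) (i : ι) (t : Fin C.d → ℝ) (c : C.P)
    (p : C.Kap ν i) : C.Lmap ν i t c p = C.ev p.1.2 (c p.1.2) (t p.1.1) := rfl

lemma Lmap_contDiff (ν : Fin C.d → Finset ι) (i : ι) : ContDiff ℝ 1 (C.Lmap ν i) := by
  rw [contDiff_clm_apply_iff]
  intro c
  rw [contDiff_pi]
  intro p
  simp only [Lmap_apply]
  exact (C.contDiff_ev p.1.2).comp (contDiff_const.prodMk (contDiff_apply ℝ ℝ p.1.1))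

lemma Lmap_surj (ν : Fin C.d → Finset ι) (i : ι) (t : Fin C.d → ℝ)
    (ht : Function.Injective t) (htI : ∀ l, C.A < t l ∧ t l < C.B) :
    Function.Surjective (C.Lmap ν i t) := by
  intro z
  have key : ∀ j : ι, ∃ w : Fin (C.D j) → ℝ, ∀ l (h : j ∈ ν l ∧ j ≠ i),
      C.ev j w (t l) = z ⟨(l, j), h⟩ := by
    intro j
    obtain ⟨w, hw⟩ := C.interp j (Finset.univ.image t) (by simpa using htI)
      (Finset.card_image_le.trans (by simp))
      (Function.extend t (fun l => if h : j ∈ ν l ∧ j ≠ i then z ⟨(l, j), h⟩ else 0) 0)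
    refine ⟨w, fun l h => ?_⟩
    have := hw (t l) (by simp)
    rw [ht.extend_apply] at this
    simpa [h, ev] using this
  choose w hw using key
  refine ⟨w, ?_⟩
  ext p
  obtain ⟨⟨l, j⟩, hp⟩ := p
  simpa using hw j l hp

lemma card_Kap (ν : Fin C.d → Finset ι) (i : ι) (hν : ∀ l, ν l ∈ C.NF) :
    C.d * (C.ρ - 1) ≤ Fintype.card (C.Kap ν i) := by
  classical
  have : Fintype.card (C.Kap ν i) = ∑ l : Fin C.d, ((ν l).erase i).card := by
    rw [Fintype.card_subtype, ← Finset.card_sigma]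
    refine Finset.card_bij' (fun p _ => ⟨p.1, p.2⟩) (fun p _ => (p.1, p.2)) ?_ ?_ ?_ ?_
    · intro p hp; simp at hp ⊢; exact ⟨hp.2, hp.1⟩
    · intro p hp; simp at hp ⊢; exact ⟨hp.2, hp.1⟩
    · intro p hp; rfl
    · intro p hp; rfl
  rw [this]
  calc C.d * (C.ρ - 1) = ∑ l : Fin C.d, (C.ρ - 1) := by simp
    _ ≤ _ := Finset.sum_le_sum fun l _ =>
      (Nat.sub_le_sub_right (C.card_NF _ (hν l)) 1).trans Finset.pred_card_le_card_erase

/-- The bad parameters, for fixed forbidden sets. -/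
def BadNu (h : E × ℝ → ι → ℝ) (Q : Set E) (i : ι) (ν : Fin C.d → Finset ι) : Set C.P :=
  {c | ∃ x ∈ Q, ∃ t : Fin C.d → ℝ, Function.Injective t ∧ (∀ l, C.A < t l ∧ t l < C.B) ∧
    ∀ l, ∀ j ∈ ν l, j ≠ i → h (x, t l) j + C.ev j (c j) (t l) = 0}

lemma dimH_badLocal (h : E × ℝ → ι → ℝ) (Q : Set E) (i : ι) (ν : Fin C.d → Finset ι)
    (hν : ∀ l, ν l ∈ C.NF)
    (hsm : ∀ x ∈ Q, ∀ t, ContDiffAt ℝ 1 h (x, t))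
    (hdim : Module.finrank ℝ E + C.d < C.d * (C.ρ - 1))
    (t₀ : Fin C.d → ℝ) (ht : Function.Injective t₀) (htI : ∀ l, C.A < t₀ l ∧ t₀ l < C.B) :
    ∃ V ∈ nhds t₀, dimH {c : C.P | ∃ x ∈ Q, ∃ t ∈ V,
      ∀ l, ∀ j ∈ ν l, j ≠ i → h (x, t l) j + C.ev j (c j) (t l) = 0} ≤
        ((Module.finrank ℝ C.P - 1 : ℕ) : ENNReal) := by
  have hs := C.Lmap_surj ν i t₀ ht htI
  set L := C.Lmap ν i with hL
  have hs' : LinearMap.range (L t₀ : C.P →ₗ[ℝ] (C.Kap ν i → ℝ)) = ⊤ := LinearMap.range_eq_top.2 hs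
  obtain ⟨R₀, hR₀⟩ := (L t₀ : C.P →ₗ[ℝ] (C.Kap ν i → ℝ)).exists_rightInverse_of_surjective hs'
  let R : (C.Kap ν i → ℝ) →L[ℝ] C.P := LinearMap.toContinuousLinearMap R₀
  have hR : ∀ z, L t₀ (R z) = z := fun z => by
    exact LinearMap.congr_fun hR₀ z
  let N₀ := LinearMap.ker (L t₀ : C.P →ₗ[ℝ] (C.Kap ν i → ℝ))
  let M : (Fin C.d → ℝ) → ((C.Kap ν i → ℝ) →L[ℝ] (C.Kap ν i → ℝ)) := fun t => (L t).comp R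
  have hMc : ContDiff ℝ 1 M := (C.Lmap_contDiff ν i).clm_comp contDiff_const
  have hM0 : M t₀ = (ContinuousLinearEquiv.refl ℝ (C.Kap ν i → ℝ) :
      (C.Kap ν i → ℝ) →L[ℝ] (C.Kap ν i → ℝ)) := by
    ext z p; simp [M, hR]
  let V : Set (Fin C.d → ℝ) := M ⁻¹' (Set.range
    ((↑) : ((C.Kap ν i → ℝ) ≃L[ℝ] (C.Kap ν i → ℝ)) → ((C.Kap ν i → ℝ) →L[ℝ] (C.Kap ν i → ℝ))))
  have hV : V ∈ nhds t₀ := by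
    apply hMc.continuous.continuousAt
    rw [hM0]
    exact ContinuousLinearEquiv.nhds _
  refine ⟨V, hV, ?_⟩
  let hk : E × (Fin C.d → ℝ) → (C.Kap ν i → ℝ) := fun q p => h (q.1, q.2 p.1.1) p.1.2
  let Ψ : E × (Fin C.d → ℝ) × N₀ → C.P := fun q =>
    (q.2.2 : C.P) + R ((M q.2.1).inverse (-(hk (q.1, q.2.1)) - L q.2.1 (q.2.2 : C.P)))
  let s : Set (E × (Fin C.d → ℝ) × N₀) := {q | q.1 ∈ Q ∧ q.2.1 ∈ V}
  have hsub : {c : C.P | ∃ x ∈ Q, ∃ t ∈ V,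
      ∀ l, ∀ j ∈ ν l, j ≠ i → h (x, t l) j + C.ev j (c j) (t l) = 0} ⊆ Ψ '' s := by
    rintro c ⟨x, hx, t, htV, hc⟩
    have hn : c - R (L t₀ c) ∈ N₀ := by
      simp [N₀, hR]
    refine ⟨(x, t, ⟨c - R (L t₀ c), hn⟩), ⟨hx, htV⟩, ?_⟩
    obtain ⟨eq, heq⟩ := htV
    have hLc : L t c = - hk (x, t) := by
      ext p
      have := hc p.1.1 p.1.2 p.2.1 p.2.2
      simp only [hL, Lmap_apply, hk, Pi.neg_apply]
      linarith
    have h2 : -(hk (x, t)) - L t (c - R (L t₀ c)) = M t (L t₀ c) := by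
      rw [map_sub, hLc]; simp [M]
    show (c - R (L t₀ c)) + R ((M t).inverse (-(hk (x, t)) - L t (c - R (L t₀ c)))) = c
    rw [h2, ← heq, ContinuousLinearMap.inverse_equiv]
    simp
  have hsmooth : ∀ q ∈ s, ContDiffAt ℝ 1 Ψ q := by
    rintro ⟨x, t, n⟩ ⟨hx, htV⟩
    have c1 : ContDiffAt ℝ 1 (fun q : E × (Fin C.d → ℝ) × N₀ => (q.2.2 : C.P)) (x, t, n) :=
      (N₀.subtypeL.contDiff.comp (contDiff_snd.comp contDiff_snd)).contDiffAt
    have c2 : ContDiffAt ℝ 1 (fun q : E × (Fin C.d → ℝ) × N₀ => hk (q.1, q.2.1)) (x, t, n) := by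
      rw [contDiffAt_pi]
      intro p
      have a1 : ContDiffAt ℝ 1 (fun q : E × (Fin C.d → ℝ) × N₀ => h (q.1, q.2.1 p.1.1))
          (x, t, n) := by
        refine ContDiffAt.comp (x, t, n) (g := h)
          (f := fun q : E × (Fin C.d → ℝ) × N₀ => (q.1, q.2.1 p.1.1)) (hsm x hx _) ?_
        exact (contDiff_fst.prodMk
          ((contDiff_apply ℝ ℝ p.1.1).comp (contDiff_fst.comp contDiff_snd))).contDiffAt
      exact (contDiffAt_pi.1 a1) p.1.2
    have c3 : ContDiffAt ℝ 1 (fun q : E × (Fin C.d → ℝ) × N₀ => L q.2.1 (q.2.2 : C.P))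
        (x, t, n) :=
      (((C.Lmap_contDiff ν i).comp (contDiff_fst.comp contDiff_snd)).contDiffAt).clm_apply c1
    have c4 : ContDiffAt ℝ 1 (fun q : E × (Fin C.d → ℝ) × N₀ => (M q.2.1).inverse)
        (x, t, n) := by
      obtain ⟨eq, heq⟩ := htV
      have b1 : ContDiffAt ℝ 1 ContinuousLinearMap.inverse (M t) := by
        rw [← heq]; exact contDiffAt_map_inverse eq
      exact ContDiffAt.comp (x, t, n) (g := ContinuousLinearMap.inverse)
        (f := fun q : E × (Fin C.d → ℝ) × N₀ => M q.2.1) b1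
        (hMc.comp (contDiff_fst.comp contDiff_snd)).contDiffAt
    exact c1.add ((contDiffAt_const (c := R)).clm_apply (c4.clm_apply (c2.neg.sub c3)))
  have hN : Module.finrank ℝ N₀ + Fintype.card (C.Kap ν i) = Module.finrank ℝ C.P := by
    have := LinearMap.finrank_range_add_finrank_ker (L t₀ : C.P →ₗ[ℝ] (C.Kap ν i → ℝ))
    rw [LinearMap.range_eq_top.2 hs, finrank_top, Module.finrank_fintype_fun_eq_card] at this
    rw [add_comm]
    exact this
  have hcard := C.card_Kap ν i hν
  calc dimH _ ≤ dimH (Ψ '' s) := dimH_mono hsub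
    _ ≤ dimH s := by
      refine dimH_image_le_of_locally_lipschitzOn fun q hq => ?_
      obtain ⟨K, u, hu, hK⟩ := (hsmooth q hq).exists_lipschitzOnWith
      exact ⟨K, u, mem_nhdsWithin_of_mem_nhds hu, hK⟩
    _ ≤ dimH (Set.univ : Set (E × (Fin C.d → ℝ) × N₀)) := dimH_mono (Set.subset_univ _)
    _ = (Module.finrank ℝ (E × (Fin C.d → ℝ) × N₀) : ENNReal) := Real.dimH_univ_eq_finrank _
    _ ≤ _ := by
      have : Module.finrank ℝ (E × (Fin C.d → ℝ) × N₀) ≤ Module.finrank ℝ C.P - 1 := by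
        rw [Module.finrank_prod, Module.finrank_prod, Module.finrank_fintype_fun_eq_card,
          Fintype.card_fin]
        omega
      exact_mod_cast this

lemma dimH_badNu (h : E × ℝ → ι → ℝ) (Q : Set E) (i : ι) (ν : Fin C.d → Finset ι)
    (hν : ∀ l, ν l ∈ C.NF)
    (hsm : ∀ x ∈ Q, ∀ t, ContDiffAt ℝ 1 h (x, t))
    (hdim : Module.finrank ℝ E + C.d < C.d * (C.ρ - 1)) :
    dimH (C.BadNu h Q i ν) ≤ ((Module.finrank ℝ C.P - 1 : ℕ) : ENNReal) := by
  let T : Set (Fin C.d → ℝ) := {t | Function.Injective t ∧ ∀ l, C.A < t l ∧ t l < C.B}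
  have key : ∀ t : Fin C.d → ℝ, ∃ V : Set (Fin C.d → ℝ), t ∈ T → V ∈ nhds t ∧
      dimH {c : C.P | ∃ x ∈ Q, ∃ t' ∈ V,
      ∀ l, ∀ j ∈ ν l, j ≠ i → h (x, t' l) j + C.ev j (c j) (t' l) = 0} ≤
        ((Module.finrank ℝ C.P - 1 : ℕ) : ENNReal) := by
    intro t
    by_cases ht : t ∈ T
    · obtain ⟨V, h1, h2⟩ := C.dimH_badLocal h Q i ν hν hsm hdim t ht.1 ht.2
      exact ⟨V, fun _ => ⟨h1, h2⟩⟩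
    · exact ⟨∅, fun h => absurd h ht⟩
  choose V hV using key
  obtain ⟨S, hST, hSc, hS⟩ := TopologicalSpace.countable_cover_nhdsWithin (f := V) (s := T)
    (fun t ht => mem_nhdsWithin_of_mem_nhds (hV t ht).1)
  have hsub : C.BadNu h Q i ν ⊆ ⋃ t ∈ S, {c : C.P | ∃ x ∈ Q, ∃ t' ∈ V t,
      ∀ l, ∀ j ∈ ν l, j ≠ i → h (x, t' l) j + C.ev j (c j) (t' l) = 0} := by
    rintro c ⟨x, hx, t, ht1, ht2, hc⟩
    have := hS (show t ∈ T from ⟨ht1, ht2⟩)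
    simp only [Set.mem_iUnion] at this ⊢
    obtain ⟨t', ht', h'⟩ := this
    exact ⟨t', ht', x, hx, t, h', hc⟩
  refine (dimH_mono hsub).trans ?_
  rw [dimH_bUnion hSc]
  exact iSup₂_le fun t ht => (hV t (hST ht)).2

lemma exists_generic (h : E × ℝ → ι → ℝ) (Q : Set E) (i : ι)
    (hsm : ∀ x ∈ Q, ∀ t, ContDiffAt ℝ 1 h (x, t))
    (hdim : Module.finrank ℝ E < C.d * (C.ρ - 2))
    (O : Set C.P) (hO : O ∈ nhds (0 : C.P)) :
    ∃ c ∈ O, ∀ x ∈ Q, ∀ t : Fin C.d → ℝ, Function.Injective t →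
      (∀ l, C.A < t l ∧ t l < C.B) →
      ∃ l, ∀ ν ∈ C.NF, i ∈ ν → ∃ j ∈ ν, j ≠ i ∧ h (x, t l) j + C.ev j (c j) (t l) ≠ 0 := by
  have hdim' : Module.finrank ℝ E + C.d < C.d * (C.ρ - 1) := by
    have : C.ρ - 1 = (C.ρ - 2) + 1 := by
      rcases Nat.lt_or_ge C.ρ 2 with h' | h'
      · interval_cases hh : C.ρ <;> simp at hdim
      · omega
    rw [this, mul_add, mul_one]; omega
  let Bad : Set C.P := ⋃ ν : {ν : Fin C.d → Finset ι // ∀ l, ν l ∈ C.NF}, C.BadNu h Q i ν.1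
  have hd : dimH Bad ≤ ((Module.finrank ℝ C.P - 1 : ℕ) : ENNReal) := by
    rw [dimH_iUnion]
    exact iSup_le fun ν => C.dimH_badNu h Q i ν.1 ν.2 hsm hdim'
  by_cases hne : Bad = ∅
  · refine ⟨0, mem_of_mem_nhds hO, fun x hx t ht htI => ?_⟩
    by_contra hcon
    push Not at hcon
    choose ν hν hi hj using hcon
    have : (0 : C.P) ∈ Bad := Set.mem_iUnion.2 ⟨⟨ν, hν⟩, x, hx, t, ht, htI,
      fun l j hjν hji => hj l j hjν hji⟩
    rw [hne] at this; exact this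
  have hpos : 0 < Module.finrank ℝ C.P := by
    obtain ⟨c, hc⟩ := Set.nonempty_iff_ne_empty.2 hne
    obtain ⟨⟨ν, hν⟩, hc⟩ := Set.mem_iUnion.1 hc
    obtain ⟨x, hx, t, ht, htI, -⟩ := hc
    have hs := C.Lmap_surj ν i t ht htI
    have h1 := LinearMap.finrank_range_add_finrank_ker
      (C.Lmap ν i t : C.P →ₗ[ℝ] (C.Kap ν i → ℝ))
    rw [LinearMap.range_eq_top.2 hs, finrank_top, Module.finrank_fintype_fun_eq_card] at h1
    have := C.card_Kap ν i hν
    omega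
  have hdense : Dense Badᶜ := by
    apply dense_compl_of_dimH_lt_finrank
    refine lt_of_le_of_lt hd ?_
    exact_mod_cast Nat.sub_lt hpos one_pos
  obtain ⟨c, hcB, hcO⟩ := hdense.inter_nhds_nonempty hO
  refine ⟨c, hcO, fun x hx t ht htI => ?_⟩
  by_contra hcon
  push Not at hcon
  choose ν hν hi hj using hcon
  have : c ∈ Bad := Set.mem_iUnion.2 ⟨⟨ν, hν⟩, x, hx, t, ht, htI,
    fun l j hjν hji => hj l j hjν hji⟩
  exact hcB this

end generic
end CoreData

set_option linter.unusedSectionVars false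
namespace CoreData
variable {ι : Type} [Fintype ι] (C : CoreData ι)
variable {E : Type} [NormedAddCommGroup E] [NormedSpace ℝ E] [FiniteDimensional ℝ E]

lemma exists_bump (c : E) {a b : ℝ} (ha : 0 < a) (hab : a < b) :
    ∃ η : E → ℝ, ContDiff ℝ 1 η ∧ (∀ x, 0 ≤ η x) ∧ (∀ x, η x ≤ 1) ∧
      (∀ x ∈ Metric.closedBall c a, η x = 1) ∧ (∀ x, x ∉ Metric.ball c b → η x = 0) := by
  let f : ContDiffBump c := ⟨a, b, ha, hab⟩
  refine ⟨f, f.contDiff, fun x => f.nonneg, fun x => f.le_one,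
    fun x hx => f.one_of_mem_closedBall hx, fun x hx => f.zero_of_le_dist ?_⟩
  simpa using hx

lemma exists_smooth_select {V : Type} [NormedAddCommGroup V] [NormedSpace ℝ V]
    (t : E → Set V) (ht : ∀ x, Convex ℝ (t x))
    (hloc : ∀ x, ∃ c : V, ∀ᶠ y in nhds x, c ∈ t y) :
    ∃ g : E → V, ContDiff ℝ 1 g ∧ ∀ x, g x ∈ t x := by
  obtain ⟨g, hg⟩ := exists_contMDiffMap_forall_mem_convex_of_local_const (n := 1)
    (modelWithCornersSelf ℝ E) ht hloc
  exact ⟨g, contMDiff_iff_contDiff.1 g.contMDiff, hg⟩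

/-- A point outside the forbidden arrangement. -/
def Good (y : ι → ℝ) : Prop := ∀ ν ∈ C.NF, ∃ j ∈ ν, y j ≠ 0

lemma isOpen_good : IsOpen {y : ι → ℝ | C.Good y} := by
  have : {y : ι → ℝ | C.Good y} = ⋂ ν ∈ C.NF, ⋃ j ∈ ν, {y : ι → ℝ | y j ≠ 0} := by
    ext y; simp [Good]
  rw [this]
  refine Set.Finite.isOpen_biInter (Set.toFinite _) fun ν _ => ?_
  refine isOpen_biUnion fun j _ => ?_
  exact isOpen_ne_fun (continuous_apply j) continuous_const

/-- An admissible family. -/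
structure Fam (h : E × ℝ → ι → ℝ) : Prop where
  cont : Continuous h
  good : ∀ x, ∀ t ∈ Set.Icc C.A C.B, C.Good (h (x, t))
  hA : ∀ x, h (x, C.A) = C.pA
  hB : ∀ x, h (x, C.B) = C.pB

/-- The `i`-th coordinate is in the finite-dimensional space. -/
def PolyAt (h : E × ℝ → ι → ℝ) (x : E) (i : ι) : Prop :=
  ∃ w, ∀ t ∈ Set.Icc C.A C.B, h (x, t) i = C.e i t + C.ev i w t

/-- Straight-line homotopy relative to the complement of `S`. -/
structure Step (S : Set E) (h h' : E × ℝ → ι → ℝ) : Prop where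
  fam : C.Fam h
  fam' : C.Fam h'
  off : ∀ x, x ∉ S → ∀ t ∈ Set.Icc C.A C.B, h' (x, t) = h (x, t)
  seg : ∀ s ∈ Set.Icc (0 : ℝ) 1, ∀ x, ∀ t ∈ Set.Icc C.A C.B,
    C.Good (h (x, t) + s • (h' (x, t) - h (x, t)))

lemma Step.of_seg {S : Set E} {h h' : E × ℝ → ι → ℝ} (fam : C.Fam h) (cont : Continuous h')
    (hA : ∀ x, h' (x, C.A) = C.pA) (hB : ∀ x, h' (x, C.B) = C.pB)
    (off : ∀ x, x ∉ S → ∀ t ∈ Set.Icc C.A C.B, h' (x, t) = h (x, t))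
    (seg : ∀ s ∈ Set.Icc (0 : ℝ) 1, ∀ x, ∀ t ∈ Set.Icc C.A C.B,
      C.Good (h (x, t) + s • (h' (x, t) - h (x, t)))) : C.Step S h h' :=
  ⟨fam, ⟨cont, fun x t ht => by simpa using seg 1 (by simp) x t ht, hA, hB⟩, off, seg⟩

lemma exists_eps {h : E × ℝ → ι → ℝ} (fam : C.Fam h) (c : E) (R : ℝ) :
    ∃ ε > 0, ∀ x ∈ Metric.closedBall c R, ∀ t ∈ Set.Icc C.A C.B, ∀ y : ι → ℝ,
      ‖y - h (x, t)‖ < ε → C.Good y := by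
  have : ProperSpace E := FiniteDimensional.proper ℝ E
  have hK : IsCompact (h '' (Metric.closedBall c R ×ˢ Set.Icc C.A C.B)) :=
    ((isCompact_closedBall c R).prod isCompact_Icc).image fam.cont
  obtain ⟨ε, hε, hs⟩ := hK.exists_thickening_subset_open C.isOpen_good (by
    rintro _ ⟨⟨x, t⟩, ⟨hx, ht⟩, rfl⟩
    exact fam.good x t ht)
  refine ⟨ε, hε, fun x hx t ht y hy => hs ?_⟩
  rw [Metric.mem_thickening_iff]
  exact ⟨h (x, t), ⟨(x, t), ⟨hx, ht⟩, rfl⟩, by rwa [dist_eq_norm]⟩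

lemma Step.of_close {c : E} {R ε : ℝ} {h h' : E × ℝ → ι → ℝ} (fam : C.Fam h)
    (cont : Continuous h')
    (hA : ∀ x, h' (x, C.A) = C.pA) (hB : ∀ x, h' (x, C.B) = C.pB)
    (off : ∀ x, x ∉ Metric.ball c R → ∀ t ∈ Set.Icc C.A C.B, h' (x, t) = h (x, t))
    (hε : ∀ x ∈ Metric.closedBall c R, ∀ t ∈ Set.Icc C.A C.B, ∀ y : ι → ℝ,
      ‖y - h (x, t)‖ < ε → C.Good y)
    (hc : ∀ x ∈ Metric.ball c R, ∀ t ∈ Set.Icc C.A C.B, ‖h' (x, t) - h (x, t)‖ < ε) :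
    C.Step (Metric.ball c R) h h' := by
  refine Step.of_seg C fam cont hA hB off fun s hs x t ht => ?_
  by_cases hx : x ∈ Metric.ball c R
  · refine hε x (Metric.ball_subset_closedBall hx) t ht _ ?_
    rw [add_sub_cancel_left, norm_smul, Real.norm_eq_abs, abs_of_nonneg hs.1]
    exact lt_of_le_of_lt (mul_le_of_le_one_left (norm_nonneg _) hs.2) (hc x hx t ht)
  · rw [off x hx t ht]; simpa using fam.good x t ht

/-- The whole vector of functions. -/
def vec (w : C.P) (t : ℝ) : ι → ℝ := fun i => C.e i t + C.ev i (w i) t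

lemma contDiff_vec : ContDiff ℝ 1 (fun p : C.P × ℝ => C.vec p.1 p.2) := by
  rw [contDiff_pi]
  intro i
  unfold vec
  refine ((C.e_smooth i).comp contDiff_snd).add ?_
  exact (C.contDiff_ev i).comp (f := fun p : C.P × ℝ => (p.1 i, p.2))
    (((ContinuousLinearMap.proj (R := ℝ) (φ := fun i => Fin (C.D i) → ℝ) i).contDiff.comp
      contDiff_fst).prodMk contDiff_snd)

lemma vec_A (w : C.P) : C.vec w C.A = C.pA := by
  ext i; simp [vec, C.ev_A, C.eA]

lemma vec_B (w : C.P) : C.vec w C.B = C.pB := by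
  ext i; simp [vec, C.ev_B, C.eB]

lemma vec_combo (w w' : C.P) (a t : ℝ) :
    C.vec (w + a • (w' - w)) t = C.vec w t + a • (C.vec w' t - C.vec w t) := by
  ext i
  have : w' i - w i = w' i + (-1 : ℝ) • w i := by simp [sub_eq_add_neg]
  simp only [vec, Pi.add_apply, Pi.smul_apply, Pi.sub_apply, this, ev_add, ev_smul, smul_eq_mul]
  ring

lemma polyAt_all {h : E × ℝ → ι → ℝ} {x : E} (hp : ∀ i, C.PolyAt h x i) :
    ∃ w : C.P, ∀ t ∈ Set.Icc C.A C.B, h (x, t) = C.vec w t := by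
  choose w hw using hp
  exact ⟨w, fun t ht => funext fun i => hw i t ht⟩

/-- Smoothing near a ball. -/
lemma exists_smoothing {h : E × ℝ → ι → ℝ} (fam : C.Fam h) (c : E) {r0 r1 : ℝ} (h0 : 0 < r0)
    (h01 : r0 < r1) (hp : ∀ x, x ∉ Metric.closedBall c r0 → ∀ i, C.PolyAt h x i) :
    ∃ h' r2, 0 < r2 ∧ r2 < r1 ∧ C.Step (Metric.ball c r1) h h' ∧
      (∀ x, x ∉ Metric.closedBall c r2 → ∀ i, C.PolyAt h' x i) ∧
      ∀ x ∈ Metric.closedBall c r2, ∀ t, ContDiffAt ℝ 1 h' (x, t) := by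
  obtain ⟨ra, hra, hra1⟩ := exists_between h01
  obtain ⟨r2, hr2, hr21⟩ := exists_between hra1
  obtain ⟨r3, hr3, hr31⟩ := exists_between hr21
  obtain ⟨ε, hε, hgood⟩ := C.exists_eps fam c r1
  -- polynomial approximation away from the small ball
  obtain ⟨P₁, hP₁s, hP₁⟩ := exists_smooth_select (E := E) (V := C.P)
    (fun y => {w | ra ≤ dist y c → ∀ t ∈ Set.Icc C.A C.B, ‖C.vec w t - h (y, t)‖ < ε}) (by
      intro x w hw w' hw' a b ha hb hab hx t ht
      have e1 : a • w + b • w' = w + b • (w' - w) := by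
        rw [show a = 1 - b by linarith]; module
      have e2 : C.vec (a • w + b • w') t - h (x, t) =
          a • (C.vec w t - h (x, t)) + b • (C.vec w' t - h (x, t)) := by
        rw [e1, vec_combo, show a = 1 - b by linarith]; module
      have := (convex_ball (0 : ι → ℝ) ε) (x := C.vec w t - h (x, t))
        (by simpa using hw hx t ht) (y := C.vec w' t - h (x, t))
        (by simpa using hw' hx t ht) ha hb hab
      rw [e2]; simpa using this) (by
      intro x
      by_cases hx : ra ≤ dist x c
      · obtain ⟨w, hw⟩ := C.polyAt_all (hp x (by simp; linarith))
        refine ⟨w, ?_⟩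
        have : ∀ᶠ y in nhds x, ∀ t ∈ Set.Icc C.A C.B, ‖C.vec w t - h (y, t)‖ < ε := by
          apply isCompact_Icc.eventually_forall_of_forall_eventually
          intro t ht
          have hc : Continuous (fun z : E × ℝ => ‖C.vec w z.2 - h (z.1, z.2)‖) :=
            ((C.contDiff_vec.continuous.comp (continuous_const.prodMk continuous_snd)).sub
              fam.cont).norm
          refine hc.continuousAt.eventually_lt continuousAt_const ?_
          simp [hw t ht, hε]
        filter_upwards [this] with y hy _ using hy
      · refine ⟨0, ?_⟩
        have : ∀ᶠ y in nhds x, dist y c < ra :=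
          (continuous_id.dist continuous_const).continuousAt.eventually_lt continuousAt_const
            (not_le.1 hx)
        filter_upwards [this] with y hy h' using absurd h' (not_le.2 hy))
  -- smooth approximation everywhere
  obtain ⟨G, hGs, hG⟩ := exists_smooth_select (E := E × ℝ) (V := ι → ℝ)
    (fun z => {y | ‖y - h z‖ < ε ∧ (z.2 = C.A → y = C.pA) ∧ (z.2 = C.B → y = C.pB)}) (by
      intro z y hy y' hy' a b ha hb hab
      refine ⟨?_, ?_, ?_⟩
      · have := (convex_ball (h z) ε) (x := y) (by simpa [dist_eq_norm] using hy.1) (y := y')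
          (by simpa [dist_eq_norm] using hy'.1) ha hb hab
        simpa [dist_eq_norm] using this
      · intro hz
        rw [hy.2.1 hz, hy'.2.1 hz, ← add_smul, hab, one_smul]
      · intro hz
        rw [hy.2.2 hz, hy'.2.2 hz, ← add_smul, hab, one_smul]) (by
      intro z
      refine ⟨h z, ?_⟩
      have e1 : ∀ᶠ y in nhds z, ‖h z - h y‖ < ε :=
        ((continuous_const.sub fam.cont).norm).continuousAt.eventually_lt continuousAt_const
          (by simpa using hε)
      have e2 : ∀ a : ℝ, ∀ p : ι → ℝ, (∀ x, h (x, a) = p) →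
          ∀ᶠ y in nhds z, y.2 = a → h z = p := by
        intro a p hap
        by_cases hz : z.2 = a
        · refine Filter.Eventually.of_forall fun y _ => ?_
          rw [← hap z.1, ← hz]
        · have : ∀ᶠ y in nhds z, y.2 ≠ a :=
            continuous_snd.continuousAt.eventually_ne hz
          filter_upwards [this] with y hy h' using absurd h' hy
      filter_upwards [e1, e2 _ _ fam.hA, e2 _ _ fam.hB] with y h1 h2 h3 using ⟨h1, h2, h3⟩)
  obtain ⟨χ, hχs, hχ0, hχ1, hχin, hχout⟩ := exists_bump c (h0.trans hra) hr2
  obtain ⟨η, hηs, hη0, hη1, hηin, hηout⟩ := exists_bump c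
    ((h0.trans hra).trans (hr2.trans hr3)) hr31
  let hs : E × ℝ → ι → ℝ := fun z => C.vec (P₁ z.1) z.2 + χ z.1 • (G z - C.vec (P₁ z.1) z.2)
  let h' : E × ℝ → ι → ℝ := fun z => h z + η z.1 • (hs z - h z)
  have hvs : ContDiff ℝ 1 (fun z : E × ℝ => C.vec (P₁ z.1) z.2) :=
    C.contDiff_vec.comp ((hP₁s.comp contDiff_fst).prodMk contDiff_snd)
  have hss : ContDiff ℝ 1 hs := hvs.add ((hχs.comp contDiff_fst).smul (hGs.sub hvs))
  have hsclose : ∀ x, ∀ t ∈ Set.Icc C.A C.B, ‖hs (x, t) - h (x, t)‖ < ε := by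
    intro x t ht
    by_cases hx : x ∈ Metric.closedBall c ra
    · simp only [hs, hχin x hx, one_smul, add_sub_cancel]
      exact (hG (x, t)).1
    · have := (convex_ball (h (x, t)) ε) (x := C.vec (P₁ x) t)
        (by
          rw [Metric.mem_ball, dist_eq_norm]
          exact hP₁ x (le_of_lt (by simpa using hx)) t ht) (y := G (x, t))
        (by rw [Metric.mem_ball, dist_eq_norm]; exact (hG (x, t)).1)
        (a := 1 - χ x) (b := χ x) (by linarith [hχ1 x]) (hχ0 x) (by ring)
      rw [Metric.mem_ball, dist_eq_norm] at this
      have e3 : hs (x, t) = (1 - χ x) • C.vec (P₁ x) t + χ x • G (x, t) := by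
        simp only [hs]; module
      rw [e3]; exact this
  have hsA : ∀ x, hs (x, C.A) = C.pA := fun x => by
    simp [hs, vec_A, (hG (x, C.A)).2.1 rfl]
  have hsB : ∀ x, hs (x, C.B) = C.pB := fun x => by
    simp [hs, vec_B, (hG (x, C.B)).2.2 rfl]
  refine ⟨h', r2, (h0.trans hra).trans hr2, hr21, ?_, ?_, ?_⟩
  · refine Step.of_close C (ε := ε) fam ?_ ?_ ?_ ?_ hgood ?_
    · exact fam.cont.add ((hηs.continuous.comp continuous_fst).smul
        (hss.continuous.sub fam.cont))
    · intro x; simp [h', hsA, fam.hA]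
    · intro x; simp [h', hsB, fam.hB]
    · intro x hx t _; simp [h', hηout x hx]
    · intro x _ t ht
      simp only [h', add_sub_cancel_left, norm_smul, Real.norm_eq_abs, abs_of_nonneg (hη0 x)]
      exact lt_of_le_of_lt (mul_le_of_le_one_left (norm_nonneg _) (hη1 x)) (hsclose x t ht)
  · intro x hx i
    have hxr0 : x ∉ Metric.closedBall c r0 := fun hc => hx
      (Metric.closedBall_subset_closedBall (hra.le.trans hr2.le) hc)
    obtain ⟨w, hw⟩ := C.polyAt_all (hp x hxr0)
    refine ⟨(w + η x • (P₁ x - w)) i, fun t ht => ?_⟩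
    have h1 : χ x = 0 := hχout x fun hc => hx (Metric.ball_subset_closedBall hc)
    have h2 : h' (x, t) = C.vec (w + η x • (P₁ x - w)) t := by
      rw [vec_combo]; simp [h', hs, h1, hw t ht]
    rw [h2]; rfl
  · intro x hx t
    have : h' =ᶠ[nhds (x, t)] hs := by
      have h1 : ∀ᶠ z : E × ℝ in nhds (x, t), z.1 ∈ Metric.ball c r3 :=
        continuous_fst.continuousAt.eventually_mem
          (Metric.isOpen_ball.mem_nhds (lt_of_le_of_lt hx hr3))
      filter_upwards [h1] with z hz
      simp [h', hηin z.1 (Metric.ball_subset_closedBall hz)]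
    exact hss.contDiffAt.congr_of_eventuallyEq this

end CoreData

namespace CoreData
variable {ι : Type} [Fintype ι] (C : CoreData ι)
variable {E : Type} [NormedAddCommGroup E] [NormedSpace ℝ E] [FiniteDimensional ℝ E]

/-- The invariant of the induction. -/
structure Inv (c : E) (r2 : ℝ) (J : Set ι) (h : E × ℝ → ι → ℝ) : Prop where
  fam : C.Fam h
  off : ∀ x, x ∉ Metric.closedBall c r2 → ∀ i, C.PolyAt h x i
  smooth : ∀ x ∈ Metric.closedBall c r2, ∀ t, ContDiffAt ℝ 1 h (x, t)
  done : ∀ i ∈ J, ∀ x, C.PolyAt h x i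

/-- The critical times for coordinate `i`. -/
def Crit (h : E × ℝ → ι → ℝ) (i : ι) (z : E × ℝ) : Prop :=
  ∃ ν ∈ C.NF, i ∈ ν ∧ ∀ j ∈ ν, j ≠ i → h z j = 0

lemma isClosed_crit {h : E × ℝ → ι → ℝ} (hc : Continuous h) (i : ι) :
    IsClosed {z | C.Crit h i z} := by
  have : {z | C.Crit h i z} = ⋃ ν ∈ {ν | ν ∈ C.NF ∧ i ∈ ν}, ⋂ j ∈ {j | j ∈ ν ∧ j ≠ i},
      {z | h z j = 0} := by
    ext z; simp [Crit, and_assoc]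
  rw [this]
  refine Set.Finite.isClosed_biUnion (Set.toFinite _) fun ν _ => ?_
  refine isClosed_biInter fun j _ => ?_
  exact isClosed_eq ((continuous_apply j).comp hc) continuous_const

lemma exists_perturb {h : E × ℝ → ι → ℝ} {c : E} {r2 r1 : ℝ} (h2 : 0 < r2) (h21 : r2 < r1)
    {J : Set ι} (hI : C.Inv c r2 J h) (hdim : Module.finrank ℝ E < C.d * (C.ρ - 2)) (i : ι) :
    ∃ h', C.Step (Metric.ball c r1) h h' ∧ C.Inv c r2 J h' ∧
      ∀ x ∈ Metric.closedBall c r2, ∃ T : Finset ℝ, T.card ≤ C.d ∧ (∀ t ∈ T, C.A < t ∧ t < C.B) ∧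
        ∀ t ∈ Set.Icc C.A C.B, C.Crit h' i (x, t) → t ∈ T := by
  obtain ⟨ε, hε, hgood⟩ := C.exists_eps hI.fam c r1
  have hO : ∀ᶠ w : C.P in nhds 0, ∀ t ∈ Set.Icc C.A C.B, ‖C.vec w t - C.vec 0 t‖ < ε := by
    apply isCompact_Icc.eventually_forall_of_forall_eventually
    intro t ht
    have hc : Continuous (fun z : C.P × ℝ => ‖C.vec z.1 z.2 - C.vec 0 z.2‖) :=
      (C.contDiff_vec.continuous.sub
        (C.contDiff_vec.continuous.comp (continuous_const.prodMk continuous_snd))).norm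
    refine hc.continuousAt.eventually_lt continuousAt_const ?_
    simp [hε]
  obtain ⟨w, hwO, hw⟩ := C.exists_generic h (Metric.closedBall c r2) i hI.smooth hdim _ hO
  have hvec : ∀ t, C.vec w t - C.vec 0 t = fun j => C.ev j (w j) t := by
    intro t; ext j; simp [vec, ev]
  obtain ⟨η, hηs, hη0, hη1, hηin, hηout⟩ := exists_bump c h2 h21
  let h' : E × ℝ → ι → ℝ := fun z => h z + η z.1 • fun j => C.ev j (w j) z.2
  have hevs : ContDiff ℝ 1 (fun z : E × ℝ => fun j => C.ev j (w j) z.2) := by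
    rw [contDiff_pi]; intro j
    exact (C.contDiff_ev j).comp (contDiff_const.prodMk contDiff_snd)
  have hstep : C.Step (Metric.ball c r1) h h' := by
    refine Step.of_close C (ε := ε) hI.fam ?_ ?_ ?_ ?_ hgood ?_
    · exact hI.fam.cont.add ((hηs.continuous.comp continuous_fst).smul hevs.continuous)
    · intro x
      ext j; simp [h', hI.fam.hA, ev_A]
    · intro x
      ext j; simp [h', hI.fam.hB, ev_B]
    · intro x hx t _; simp [h', hηout x hx]
    · intro x _ t ht
      have := hwO t ht
      rw [hvec] at this
      simp only [h', add_sub_cancel_left, norm_smul, Real.norm_eq_abs, abs_of_nonneg (hη0 x)]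
      exact lt_of_le_of_lt (mul_le_of_le_one_left (norm_nonneg _) (hη1 x)) this
  have hpoly : ∀ x j, C.PolyAt h x j → C.PolyAt h' x j := by
    rintro x j ⟨v, hv⟩
    refine ⟨v + η x • w j, fun t ht => ?_⟩
    simp only [h', Pi.add_apply, Pi.smul_apply, hv t ht, ev_add, ev_smul, smul_eq_mul]
    ring
  refine ⟨h', hstep, ⟨hstep.fam', fun x hx j => hpoly x j (hI.off x hx j), fun x hx t => ?_,
    fun j hj x => hpoly x j (hI.done j hj x)⟩, fun x hx => ?_⟩
  · exact (hI.smooth x hx t).add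
      (((hηs.comp contDiff_fst).contDiffAt).smul hevs.contDiffAt)
  · let Tx : Set ℝ := {t | t ∈ Set.Icc C.A C.B ∧ C.Crit h' i (x, t)}
    have hTx : ∀ t ∈ Tx, C.A < t ∧ t < C.B := by
      rintro t ⟨⟨ha, hb⟩, ν, hν, hi, hj⟩
      constructor
      · refine lt_of_le_of_ne ha ?_
        rintro rfl
        obtain ⟨j, hjν, hji, hne⟩ := C.endA ν hν i hi
        exact hne (by rw [← hstep.fam'.hA x]; exact hj j hjν hji)
      · refine lt_of_le_of_ne hb ?_
        rintro rfl
        obtain ⟨j, hjν, hji, hne⟩ := C.endB ν hν i hi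
        exact hne (by rw [← hstep.fam'.hB x]; exact hj j hjν hji)
    have hcard : ∀ S : Finset ℝ, ↑S ⊆ Tx → S.card < C.d := by
      intro S hS
      by_contra hcon
      obtain ⟨S', hS', hcard⟩ := Finset.exists_subset_card_eq (not_lt.1 hcon)
      let tt : Fin C.d → ℝ := fun l => (S'.equivFinOfCardEq hcard).symm l
      have ht : Function.Injective tt :=
        Subtype.val_injective.comp (S'.equivFinOfCardEq hcard).symm.injective
      have hmem : ∀ l, tt l ∈ Tx := fun l => hS (hS' ((S'.equivFinOfCardEq hcard).symm l).2)
      obtain ⟨l, hl⟩ := hw x hx tt ht (fun l => hTx _ (hmem l))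
      obtain ⟨-, ν, hν, hi, hj⟩ := hmem l
      obtain ⟨j, hjν, hji, hne⟩ := hl ν hν hi
      have := hj j hjν hji
      simp only [h', hηin x hx, one_smul] at this
      exact hne this
    have hfin : Tx.Finite := by
      by_contra hinf
      obtain ⟨S, hS, hc⟩ := (show Tx.Infinite from hinf).exists_subset_card_eq C.d
      exact absurd (hcard S hS) (by omega)
    refine ⟨hfin.toFinset, (hcard _ (by simp)).le, fun t ht => hTx t (by simpa using ht),
      fun t ht hc => by simpa using ⟨ht, hc⟩⟩

lemma exists_stepI {h : E × ℝ → ι → ℝ} {c : E} {r2 r1 : ℝ} (h2 : 0 < r2) (h21 : r2 < r1)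
    {J : Set ι} (hI : C.Inv c r2 J h) (i : ι)
    (hT : ∀ x ∈ Metric.closedBall c r2, ∃ T : Finset ℝ, T.card ≤ C.d ∧
      (∀ t ∈ T, C.A < t ∧ t < C.B) ∧ ∀ t ∈ Set.Icc C.A C.B, C.Crit h i (x, t) → t ∈ T) :
    ∃ h', C.Step (Metric.ball c r1) h h' ∧ C.Inv c r2 (insert i J) h' := by
  have hne : ∀ x, ∀ t ∈ Set.Icc C.A C.B, C.Crit h i (x, t) → h (x, t) i ≠ 0 := by
    rintro x t ht ⟨ν, hν, hi, hj⟩ h0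
    obtain ⟨j, hjν, hne⟩ := hI.fam.good x t ht ν hν
    by_cases hji : j = i
    · exact hne (hji ▸ h0)
    · exact hne (hj j hjν hji)
  obtain ⟨β, hβs, hβ⟩ := exists_smooth_select (E := E) (V := Fin (C.D i) → ℝ)
    (fun x => {w | ∀ t ∈ Set.Icc C.A C.B, C.Crit h i (x, t) →
      0 < (C.e i t + C.ev i w t) * h (x, t) i}) (by
      intro x w hw w' hw' a b ha hb hab t ht hc
      have h1 := hw t ht hc
      have h2 := hw' t ht hc
      have : (C.e i t + C.ev i (a • w + b • w') t) * h (x, t) i =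
          a * ((C.e i t + C.ev i w t) * h (x, t) i) +
            b * ((C.e i t + C.ev i w' t) * h (x, t) i) := by
        rw [ev_add, ev_smul, ev_smul, show a = 1 - b by linarith]; ring
      rw [this]
      rcases ha.eq_or_lt with rfl | ha'
      · have : b = 1 := by linarith
        subst this; simpa using h2
      · have := mul_pos ha' h1
        have := mul_nonneg hb h2.le
        linarith) (by
      intro x
      have hex : ∃ w, ∀ t ∈ Set.Icc C.A C.B, C.Crit h i (x, t) →
          C.e i t + C.ev i w t = h (x, t) i := by
        by_cases hx : x ∈ Metric.closedBall c r2
        · obtain ⟨T, hTc, hTI, hTm⟩ := hT x hx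
          obtain ⟨w, hw⟩ := C.interp i T hTI hTc (fun t => h (x, t) i - C.e i t)
          refine ⟨w, fun t ht hc => ?_⟩
          have := hw t (hTm t ht hc)
          unfold ev; rw [this]; ring
        · obtain ⟨w, hw⟩ := hI.off x hx i
          exact ⟨w, fun t ht _ => (hw t ht).symm⟩
      obtain ⟨w, hw⟩ := hex
      refine ⟨w, ?_⟩
      apply isCompact_Icc.eventually_forall_of_forall_eventually
        (P := fun y t => C.Crit h i (y, t) → 0 < (C.e i t + C.ev i w t) * h (y, t) i)
      intro t ht
      by_cases hc : C.Crit h i (x, t)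
      · have hcont : Continuous (fun z : E × ℝ => (C.e i z.2 + C.ev i w z.2) * h (z.1, z.2) i) :=
          (((C.e_smooth i).continuous.comp continuous_snd).add
            ((C.continuous_ev i).comp (continuous_const.prodMk continuous_snd))).mul
              ((continuous_apply i).comp hI.fam.cont)
        have : ∀ᶠ z : E × ℝ in nhds (x, t), 0 < (C.e i z.2 + C.ev i w z.2) * h (z.1, z.2) i := by
          refine continuousAt_const.eventually_lt hcont.continuousAt ?_
          simp only [hw t ht hc]
          exact mul_self_pos.2 (hne x t ht hc)
        filter_upwards [this] with z hz _ using hz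
      · have : ∀ᶠ z : E × ℝ in nhds (x, t), ¬ C.Crit h i z :=
          (C.isClosed_crit hI.fam.cont i).isOpen_compl.mem_nhds hc
        filter_upwards [this] with z hz h' using absurd h' hz)
  obtain ⟨η, hηs, hη0, hη1, hηin, hηout⟩ := exists_bump c h2 h21
  let h' : E × ℝ → ι → ℝ := fun z j => if j = i then
    h z i + η z.1 * (C.e i z.2 + C.ev i (β z.1) z.2 - h z i) else h z j
  have hevs : ContDiff ℝ 1 (fun z : E × ℝ => C.e i z.2 + C.ev i (β z.1) z.2) :=
    ((C.e_smooth i).comp contDiff_snd).add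
      ((C.contDiff_ev i).comp ((hβs.comp contDiff_fst).prodMk contDiff_snd))
  have hstep : C.Step (Metric.ball c r1) h h' := by
    refine Step.of_seg C hI.fam ?_ ?_ ?_ ?_ ?_
    · refine continuous_pi fun j => ?_
      by_cases hj : j = i
      · simp only [h', hj, if_true]
        have := (continuous_apply i).comp hI.fam.cont
        exact this.add ((hηs.continuous.comp continuous_fst).mul (hevs.continuous.sub this))
      · simp only [h', hj, if_false]
        exact (continuous_apply j).comp hI.fam.cont
    · intro x; ext j
      by_cases hj : j = i
      · subst hj; simp [h', hI.fam.hA, ev_A, C.eA]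
      · simp [h', hj, hI.fam.hA]
    · intro x; ext j
      by_cases hj : j = i
      · subst hj; simp [h', hI.fam.hB, ev_B, C.eB]
      · simp [h', hj, hI.fam.hB]
    · intro x hx t _; ext j
      by_cases hj : j = i
      · subst hj; simp [h', hηout x hx]
      · simp [h', hj]
    · intro s hs x t ht ν hν
      by_cases hcr : i ∈ ν ∧ ∀ j ∈ ν, j ≠ i → h (x, t) j = 0
      · have hc : C.Crit h i (x, t) := ⟨ν, hν, hcr⟩
        refine ⟨i, hcr.1, ?_⟩
        have h1 := hβ x t ht hc
        have h2 := mul_self_pos.2 (hne x t ht hc)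
        simp only [h', Pi.add_apply, Pi.smul_apply, Pi.sub_apply, if_true, smul_eq_mul]
        intro h0
        have h3 : 0 ≤ s * η x := mul_nonneg hs.1 (hη0 x)
        have h4 : s * η x ≤ 1 := mul_le_one₀ hs.2 (hη0 x) (hη1 x)
        have h5 : (1 - s * η x) * (h (x, t) i * h (x, t) i) +
            (s * η x) * ((C.e i t + C.ev i (β x) t) * h (x, t) i) = 0 := by
          have := congrArg (· * h (x, t) i) h0
          simp only [zero_mul] at this
          linarith
        rcases h3.eq_or_lt with h6 | h6
        · rw [← h6] at h5; simp at h5; exact hne x t ht hc h5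
        · have := mul_pos h6 h1
          have := mul_nonneg (sub_nonneg.2 h4) h2.le
          linarith
      · have : ∃ j ∈ ν, j ≠ i ∧ h (x, t) j ≠ 0 := by
          by_cases hi : i ∈ ν
          · by_contra hcon
            push Not at hcon
            exact hcr ⟨hi, hcon⟩
          · obtain ⟨j, hj, hjn⟩ := hI.fam.good x t ht ν hν
            exact ⟨j, hj, fun e => hi (e ▸ hj), hjn⟩
        obtain ⟨j, hj, hji, hjn⟩ := this
        exact ⟨j, hj, by simpa [h', hji] using hjn⟩
  have hpoly : ∀ x j, C.PolyAt h x j → C.PolyAt h' x j := by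
    rintro x j ⟨v, hv⟩
    by_cases hj : j = i
    · subst hj
      refine ⟨(1 - η x) • v + η x • β x, fun t ht => ?_⟩
      simp only [h', if_true, hv t ht, ev_add, ev_smul]
      ring
    · exact ⟨v, fun t ht => by simp [h', hj, hv t ht]⟩
  refine ⟨h', hstep, hstep.fam', fun x hx j => hpoly x j (hI.off x hx j), fun x hx t => ?_, ?_⟩
  · rw [contDiffAt_pi]
    intro j
    have hh := contDiffAt_pi.1 (hI.smooth x hx t)
    by_cases hj : j = i
    · simp only [h', hj, if_true]
      exact (hh i).add ((hηs.comp contDiff_fst).contDiffAt.mul (hevs.contDiffAt.sub (hh i)))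
    · simp only [h', hj, if_false]
      exact hh j
  · rintro j (rfl | hj) x
    · by_cases hx : x ∈ Metric.closedBall c r2
      · exact ⟨β x, fun t ht => by simp [h', hηin x hx]⟩
      · exact hpoly x j (hI.off x hx j)
    · exact hpoly x j (hI.done j hj x)

/-- The abstract deformation theorem. -/
theorem core {h : E × ℝ → ι → ℝ} (fam : C.Fam h) (c : E) {r0 r1 : ℝ} (h0 : 0 < r0)
    (h01 : r0 < r1) (hdim : Module.finrank ℝ E < C.d * (C.ρ - 2))
    (hp : ∀ x, x ∉ Metric.closedBall c r0 → ∀ i, C.PolyAt h x i) :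
    ∃ h', Relation.ReflTransGen (C.Step (Metric.ball c r1)) h h' ∧ C.Fam h' ∧
      ∀ x i, C.PolyAt h' x i := by
  obtain ⟨h1, r2, h2, h21, hst, hoff, hsm⟩ := C.exists_smoothing fam c h0 h01 hp
  have key : ∀ J : Finset ι, ∃ h', Relation.ReflTransGen (C.Step (Metric.ball c r1)) h h' ∧
      C.Inv c r2 (↑J) h' := by
    intro J
    induction J using Finset.induction_on with
    | empty => exact ⟨h1, Relation.ReflTransGen.single hst, hst.fam', hoff, hsm, by simp⟩
    | insert i J _ ih =>
      obtain ⟨ha, hra, hIa⟩ := ih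
      obtain ⟨hb, hsb, hIb, hTb⟩ := C.exists_perturb h2 h21 hIa hdim i
      obtain ⟨hc, hsc, hIc⟩ := C.exists_stepI h2 h21 hIb i hTb
      exact ⟨hc, (hra.tail hsb).tail hsc, by simpa using hIc⟩
  obtain ⟨h', hr, hI⟩ := key Finset.univ
  exact ⟨h', hr, hI.fam, fun x i => hI.done i (by simp) x⟩

end CoreData

/-! ### The circle as a quotient of the interval -/

/-- `tan` as a map to the circle. -/
def kap (θ : ℝ) : OnePoint ℝ :=
  if -(Real.pi / 2) < θ ∧ θ < Real.pi / 2 then ((Real.tan θ : ℝ) : OnePoint ℝ) else OnePoint.infty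

/-- A section of `kap`. -/
def sec : OnePoint ℝ → ℝ
  | OnePoint.infty => Real.pi / 2
  | OnePoint.some t => Real.arctan t

@[simp] lemma sec_infty : sec OnePoint.infty = Real.pi / 2 := rfl
@[simp] lemma sec_coe (t : ℝ) : sec (t : OnePoint ℝ) = Real.arctan t := rfl

@[simp] lemma kap_B : kap (Real.pi / 2) = OnePoint.infty := by simp [kap]
@[simp] lemma kap_A : kap (-(Real.pi / 2)) = OnePoint.infty := by simp [kap]

lemma kap_of {θ : ℝ} (h1 : -(Real.pi / 2) < θ) (h2 : θ < Real.pi / 2) :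
    kap θ = ((Real.tan θ : ℝ) : OnePoint ℝ) := if_pos ⟨h1, h2⟩

@[simp] lemma kap_arctan (t : ℝ) : kap (Real.arctan t) = (t : OnePoint ℝ) := by
  rw [kap_of (Real.neg_pi_div_two_lt_arctan t) (Real.arctan_lt_pi_div_two t), Real.tan_arctan]

@[simp] lemma kap_sec (p : OnePoint ℝ) : kap (sec p) = p := by
  induction p using OnePoint.rec with
  | infty => simp
  | coe t => simp

lemma sec_mem (p : OnePoint ℝ) : sec p ∈ Set.Icc (-(Real.pi / 2)) (Real.pi / 2) := by
  induction p using OnePoint.rec with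
  | infty => simp; linarith [Real.pi_pos]
  | coe t => exact ⟨(Real.neg_pi_div_two_lt_arctan t).le, (Real.arctan_lt_pi_div_two t).le⟩

lemma continuous_kap : Continuous kap := by
  have hpi := Real.pi_pos
  have hinf : ∀ θ : ℝ, ¬ (-(Real.pi / 2) < θ ∧ θ < Real.pi / 2) → kap θ = OnePoint.infty :=
    fun θ h => if_neg h
  have hcc : Filter.cocompact ℝ ≤ Filter.coclosedCompact ℝ := by simp
  have hTop : Filter.Tendsto (fun t : ℝ => (t : OnePoint ℝ)) Filter.atTop (nhds OnePoint.infty) :=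
    OnePoint.tendsto_coe_infty.mono_left (atTop_le_cocompact.trans hcc)
  have hBot : Filter.Tendsto (fun t : ℝ => (t : OnePoint ℝ)) Filter.atBot (nhds OnePoint.infty) :=
    OnePoint.tendsto_coe_infty.mono_left (atBot_le_cocompact.trans hcc)
  rw [continuous_iff_continuousAt]
  intro θ
  rcases lt_trichotomy θ (-(Real.pi / 2)) with h | h | h
  · have : kap =ᶠ[nhds θ] fun _ => OnePoint.infty := by
      filter_upwards [gt_mem_nhds h] with y hy
      exact hinf y fun hh => by linarith [hh.1]
    exact continuousAt_const.congr this.symm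
  · subst h
    have : Filter.Tendsto kap (nhds (-(Real.pi / 2))) (nhds OnePoint.infty) := by
      rw [← nhdsLE_sup_nhdsGT, Filter.tendsto_sup]
      constructor
      · refine tendsto_const_nhds.congr' ?_
        filter_upwards [self_mem_nhdsWithin] with y hy
        exact (hinf y fun hh => absurd hh.1 (not_lt.2 hy)).symm
      · refine (hBot.comp Real.tendsto_tan_neg_pi_div_two).congr' ?_
        filter_upwards [Ioo_mem_nhdsGT (show -(Real.pi / 2) < Real.pi / 2 by linarith)] with y hy
        exact (kap_of hy.1 hy.2).symm
    unfold ContinuousAt; rwa [kap_A]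
  rcases lt_trichotomy θ (Real.pi / 2) with h' | h' | h'
  · have : kap =ᶠ[nhds θ] fun y => ((Real.tan y : ℝ) : OnePoint ℝ) := by
      filter_upwards [Ioo_mem_nhds h h'] with y hy
      exact kap_of hy.1 hy.2
    refine ContinuousAt.congr ?_ this.symm
    refine OnePoint.continuous_coe.continuousAt.comp ?_
    exact Real.continuousAt_tan.2 (Real.cos_pos_of_mem_Ioo ⟨h, h'⟩).ne'
  · subst h'
    have : Filter.Tendsto kap (nhds (Real.pi / 2)) (nhds OnePoint.infty) := by
      rw [← nhdsLT_sup_nhdsGE, Filter.tendsto_sup]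
      constructor
      · refine (hTop.comp Real.tendsto_tan_pi_div_two).congr' ?_
        filter_upwards [Ioo_mem_nhdsLT (show -(Real.pi / 2) < Real.pi / 2 by linarith)] with y hy
        exact (kap_of hy.1 hy.2).symm
      · refine tendsto_const_nhds.congr' ?_
        filter_upwards [self_mem_nhdsWithin] with y hy
        exact (hinf y fun hh => absurd hh.2 (not_lt.2 hy)).symm
    unfold ContinuousAt; rwa [kap_B]
  · have : kap =ᶠ[nhds θ] fun _ => OnePoint.infty := by
      filter_upwards [lt_mem_nhds h'] with y hy
      exact hinf y fun hh => by linarith [hh.2]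
    exact continuousAt_const.congr this.symm

lemma continuous_of_kap {X Y : Type*} [TopologicalSpace X] [TopologicalSpace Y]
    (g : X × OnePoint ℝ → Y)
    (hg : Continuous fun p : X × Set.Icc (-(Real.pi / 2)) (Real.pi / 2) => g (p.1, kap p.2)) :
    Continuous g := by
  let k' : Set.Icc (-(Real.pi / 2)) (Real.pi / 2) → OnePoint ℝ := fun θ => kap θ
  have hk : Continuous k' := continuous_kap.comp continuous_subtype_val
  have hk2 : Continuous (Prod.map (id : X → X) k') := continuous_id.prodMap hk
  have hcl : IsClosedMap (Prod.map (id : X → X) k') :=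
    (isProperMap_id.prodMap hk.isProperMap).isClosedMap
  have hsurj : Function.Surjective (Prod.map (id : X → X) k') := by
    rintro ⟨x, p⟩
    exact ⟨(x, ⟨sec p, sec_mem p⟩), by simp [k']⟩
  exact (hcl.isQuotientMap hk2 hsurj).continuous_iff.2 hg

/-- The unit complex number `sin θ + i cos θ`. -/
def uu (θ : ℝ) : ℂ := (Real.sin θ : ℂ) + (Real.cos θ : ℂ) * Complex.I

lemma uu_ne (θ : ℝ) : uu θ ≠ 0 := by
  intro h
  have h1 := congrArg Complex.re h
  have h2 := congrArg Complex.im h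
  simp [uu, -Complex.ofReal_sin, -Complex.ofReal_cos] at h1 h2
  have := Real.sin_sq_add_cos_sq θ
  rw [h1, h2] at this; norm_num at this

lemma continuous_uu : Continuous uu := by
  unfold uu
  exact (Complex.continuous_ofReal.comp Real.continuous_sin).add
    ((Complex.continuous_ofReal.comp Real.continuous_cos).mul continuous_const)

@[simp] lemma uu_B : uu (Real.pi / 2) = 1 := by simp [uu, -Complex.ofReal_sin, -Complex.ofReal_cos]
@[simp] lemma uu_A : uu (-(Real.pi / 2)) = -1 := by
  simp [uu, -Complex.ofReal_sin, -Complex.ofReal_cos]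

lemma uu_arctan (t : ℝ) : uu (Real.arctan t) = (Real.cos (Real.arctan t) : ℂ) * (t + Complex.I) := by
  have h : (Real.sin (Real.arctan t) : ℂ) = Real.cos (Real.arctan t) * t := by
    have h1 := (Real.cos_arctan_pos t).ne'
    have h2 := Real.tan_arctan t
    rw [Real.tan_eq_sin_div_cos] at h2
    rw [← Complex.ofReal_mul]; congr 1
    field_simp at h2; linarith
  rw [uu, h]; ring

section loops
variable {r : ℕ} {K : Set (Finset (Fin r))} {D : Fin r → ℕ}

lemma UK_smul {x μ : Fin r → ℂ} (hx : x ∈ UK K) (hμ : ∀ k, μ k ≠ 0) :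
    (fun k => μ k * x k) ∈ UK K := by
  rw [mem_UK] at hx ⊢
  intro σ hσ
  obtain ⟨i, hi, hne⟩ := hx σ hσ
  exact ⟨i, hi, mul_ne_zero (hμ i) hne⟩

/-- Families of paths in `U(K)` parametrized by the interval. -/
structure CFam (K : Set (Finset (Fin r))) (D : Fin r → ℕ) {X : Type*} [TopologicalSpace X]
    (h : X × ℝ → Fin r → ℂ) : Prop where
  cont : Continuous h
  good : ∀ x, ∀ θ ∈ Set.Icc (-(Real.pi / 2)) (Real.pi / 2), h (x, θ) ∈ UK K
  hA : ∀ x k, h (x, -(Real.pi / 2)) k = (-1) ^ D k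
  hB : ∀ x k, h (x, Real.pi / 2) k = 1

/-- The loop associated to a family. -/
def toU (D : Fin r → ℕ) {X : Type*} (h : X × ℝ → Fin r → ℂ) (x : X) (p : OnePoint ℝ) :
    Fin r → ℂ := fun k => (uu (sec p) ^ D k)⁻¹ * h (x, sec p) k

lemma CFam.toU_mem {X : Type*} [TopologicalSpace X] {h : X × ℝ → Fin r → ℂ}
    (H : CFam K D h) (x : X) (p : OnePoint ℝ) : toU D h x p ∈ UK K :=
  UK_smul (H.good x _ (sec_mem p)) fun _ => inv_ne_zero (pow_ne_zero _ (uu_ne _))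

lemma CFam.toU_kap {X : Type*} [TopologicalSpace X] {h : X × ℝ → Fin r → ℂ}
    (H : CFam K D h) (x : X) {θ : ℝ} (hθ : θ ∈ Set.Icc (-(Real.pi / 2)) (Real.pi / 2)) :
    toU D h x (kap θ) = fun k => (uu θ ^ D k)⁻¹ * h (x, θ) k := by
  rcases hθ.1.eq_or_lt with h1 | h1
  · subst h1
    ext k; simp [toU, H.hA, H.hB]
  rcases hθ.2.eq_or_lt with h2 | h2
  · subst h2; ext k; simp [toU, H.hB]
  · rw [kap_of h1 h2]; ext k; simp only [toU, sec_coe, Real.arctan_tan h1 h2]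

lemma CFam.exists_loop (hE : (∅ : Finset (Fin r)) ∈ K) {X : Type*} [TopologicalSpace X]
    {h : X × ℝ → Fin r → ℂ} (H : CFam K D h) :
    ∃ F : C(X, Loop ↥(UK K) (onesUK hE)), ∀ x p, ((F x).1 p).1 = toU D h x p := by
  have hc : Continuous (fun z : X × OnePoint ℝ => toU D h z.1 z.2) := by
    apply continuous_of_kap
    have : (fun p : X × Set.Icc (-(Real.pi / 2)) (Real.pi / 2) => toU D h p.1 (kap p.2)) =
        fun p => fun k => (uu p.2 ^ D k)⁻¹ * h (p.1, p.2) k := by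
      ext p k; rw [H.toU_kap p.1 p.2.2]
    simp only [this]
    refine continuous_pi fun k => Continuous.mul (Continuous.inv₀ ?_ ?_) ?_
    · exact (continuous_uu.comp (continuous_subtype_val.comp continuous_snd)).pow _
    · intro p; exact pow_ne_zero _ (uu_ne _)
    · exact (continuous_apply k).comp (H.cont.comp
        (continuous_fst.prodMk (continuous_subtype_val.comp continuous_snd)))
  let G : C(X × OnePoint ℝ, ↥(UK K)) := ⟨fun z => ⟨toU D h z.1 z.2, H.toU_mem z.1 z.2⟩,
    hc.subtype_mk _⟩
  have hG : ∀ x, G.curry x OnePoint.infty = onesUK hE := by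
    intro x
    apply Subtype.ext
    ext k
    simp [G, toU, H.hB, onesUK, onesC]
  exact ⟨⟨fun x => ⟨G.curry x, hG x⟩, G.curry.continuous.subtype_mk hG⟩, fun x p => rfl⟩

lemma loop_ext {hE : (∅ : Finset (Fin r)) ∈ K} {γ γ' : Loop ↥(UK K) (onesUK hE)}
    (h : ∀ p, (γ.1 p).1 = (γ'.1 p).1) : γ = γ' :=
  Subtype.ext (ContinuousMap.ext fun p => Subtype.ext (h p))

lemma loop_infty {hE : (∅ : Finset (Fin r)) ∈ K} (γ : Loop ↥(UK K) (onesUK hE)) (k : Fin r) :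
    (γ.1 OnePoint.infty).1 k = 1 := by
  rw [γ.2]; rfl

lemma continuous_loop_eval (hE : (∅ : Finset (Fin r)) ∈ K) :
    Continuous fun z : Loop ↥(UK K) (onesUK hE) × OnePoint ℝ => ((z.1.1 z.2).1 : Fin r → ℂ) := by
  have h1 : Continuous fun z : Loop ↥(UK K) (onesUK hE) × OnePoint ℝ => z.1.1 :=
    continuous_subtype_val.comp continuous_fst
  exact continuous_subtype_val.comp (h1.eval continuous_snd)

/-- The family associated to a family of loops. -/
def famOf (D : Fin r → ℕ) {hE : (∅ : Finset (Fin r)) ∈ K} {X : Type*}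
    (F : X → Loop ↥(UK K) (onesUK hE)) : X × ℝ → Fin r → ℂ :=
  fun z k => uu z.2 ^ D k * ((F z.1).1 (kap z.2)).1 k

lemma famOf_cfam {hE : (∅ : Finset (Fin r)) ∈ K} {X : Type*} [TopologicalSpace X]
    (F : C(X, Loop ↥(UK K) (onesUK hE))) : CFam K D (famOf D F) where
  cont := by
    refine continuous_pi fun k => ((continuous_uu.comp continuous_snd).pow _).mul ?_
    refine (continuous_apply k).comp ((continuous_loop_eval hE).comp
      ((F.continuous.comp continuous_fst).prodMk (continuous_kap.comp continuous_snd)))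
  good x θ _ := UK_smul ((F x).1 (kap θ)).2 fun _ => pow_ne_zero _ (uu_ne _)
  hA x k := by simp [famOf, loop_infty]
  hB x k := by simp [famOf, loop_infty]

lemma toU_famOf {hE : (∅ : Finset (Fin r)) ∈ K} {X : Type*}
    (F : X → Loop ↥(UK K) (onesUK hE)) (x : X) (p : OnePoint ℝ) :
    toU D (famOf D F) x p = ((F x).1 p).1 := by
  ext k
  simp only [toU, famOf, kap_sec]
  rw [inv_mul_cancel_left₀ (pow_ne_zero _ (uu_ne _))]

/-- The homogenized polynomial. -/
def hvec (D : Fin r → ℕ) (a : ∀ k : Fin r, Fin (D k) → ℂ) (θ : ℝ) (k : Fin r) : ℂ :=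
  (Real.sin θ : ℂ) ^ D k +
    ∑ l : Fin (D k), a k l * ((Real.sin θ : ℂ) ^ (l : ℕ) * (Real.cos θ : ℂ) ^ (D k - l))

lemma toPoly_eval {d : ℕ} (a : Fin d → ℂ) (z : ℂ) :
    (toPoly a).eval z = z ^ d + ∑ l, a l * z ^ (l : ℕ) := by
  simp [toPoly, Polynomial.eval_finsetSum]

lemma hvec_eq (a : ∀ k : Fin r, Fin (D k) → ℂ) {θ : ℝ} (h1 : Real.cos θ ≠ 0) (k : Fin r) :
    hvec D a θ k = (Real.cos θ : ℂ) ^ D k * (toPoly (a k)).eval ((Real.tan θ : ℝ) : ℂ) := by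
  have hs : (Real.sin θ : ℂ) = Real.cos θ * Real.tan θ := by
    rw [← Complex.ofReal_mul]; congr 1
    rw [Real.tan_eq_sin_div_cos]; field_simp
  rw [hvec, toPoly_eval, mul_add, Finset.mul_sum, hs, mul_pow]
  congr 1
  refine Finset.sum_congr rfl fun l _ => ?_
  have : (Real.cos θ : ℂ) ^ D k = (Real.cos θ : ℂ) ^ (l : ℕ) * (Real.cos θ : ℂ) ^ (D k - l) := by
    rw [← pow_add]; congr 1; omega
  rw [this]; ring

lemma hvec_A (a : ∀ k : Fin r, Fin (D k) → ℂ) (k : Fin r) :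
    hvec D a (-(Real.pi / 2)) k = (-1) ^ D k := by
  have : ∀ l : Fin (D k), (0 : ℂ) ^ (D k - l) = 0 := fun l => zero_pow (by omega)
  simp [hvec, this, -Complex.ofReal_sin, -Complex.ofReal_cos]

lemma hvec_B (a : ∀ k : Fin r, Fin (D k) → ℂ) (k : Fin r) :
    hvec D a (Real.pi / 2) k = 1 := by
  have : ∀ l : Fin (D k), (0 : ℂ) ^ (D k - l) = 0 := fun l => zero_pow (by omega)
  simp [hvec, this, -Complex.ofReal_sin, -Complex.ofReal_cos]

lemma mem_UK_of_ne (hE : (∅ : Finset (Fin r)) ∈ K) {x : Fin r → ℂ} (h : ∀ k, x k ≠ 0) :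
    x ∈ UK K := by
  simpa [onesC] using UK_smul (ones_mem_UK hE) h

lemma hvec_cfam (hE : (∅ : Finset (Fin r)) ∈ K) :
    CFam K D (fun z : ↥(PolSp K D) × ℝ => hvec D z.1.1 z.2) where
  cont := by
    unfold hvec
    refine continuous_pi fun k => Continuous.add ?_ (continuous_finsetSum _ fun l _ => ?_)
    · exact (Complex.continuous_ofReal.comp (Real.continuous_sin.comp continuous_snd)).pow _
    · refine Continuous.mul ?_ (Continuous.mul ?_ ?_)
      · exact (continuous_apply l).comp ((continuous_apply k).comp
          (continuous_subtype_val.comp continuous_fst))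
      · exact (Complex.continuous_ofReal.comp (Real.continuous_sin.comp continuous_snd)).pow _
      · exact (Complex.continuous_ofReal.comp (Real.continuous_cos.comp continuous_snd)).pow _
  good f θ hθ := by
    rcases hθ.1.eq_or_lt with h1 | h1
    · subst h1
      exact mem_UK_of_ne hE fun k => by
        show hvec D f.1 _ k ≠ 0
        rw [hvec_A]; exact pow_ne_zero _ (by norm_num)
    rcases hθ.2.eq_or_lt with h2 | h2
    · subst h2
      exact mem_UK_of_ne hE fun k => by
        show hvec D f.1 _ k ≠ 0
        rw [hvec_B]; exact one_ne_zero
    have hc := (Real.cos_pos_of_mem_Ioo ⟨h1, h2⟩).ne'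
    have := UK_smul (μ := fun k => (Real.cos θ : ℂ) ^ D k) (polEval_mem_UK f (Real.tan θ))
      (fun k => pow_ne_zero _ (by exact_mod_cast hc))
    convert this using 1
    ext k
    exact hvec_eq _ hc k
  hA f k := hvec_A _ k
  hB f k := hvec_B _ k

/-- The standard lift. -/
def j0 (hE : (∅ : Finset (Fin r)) ∈ K) (D : Fin r → ℕ) :
    C(↥(PolSp K D), Loop ↥(UK K) (onesUK hE)) :=
  Classical.choose ((hvec_cfam (D := D) hE).exists_loop hE)

lemma j0_apply (hE : (∅ : Finset (Fin r)) ∈ K) (f : ↥(PolSp K D)) (p : OnePoint ℝ) :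
    ((j0 hE D f).1 p).1 = toU D (fun z : ↥(PolSp K D) × ℝ => hvec D z.1.1 z.2) f p :=
  Classical.choose_spec ((hvec_cfam (D := D) hE).exists_loop hE) f p

lemma j0_coe (hE : (∅ : Finset (Fin r)) ∈ K) (f : ↥(PolSp K D)) (t : ℝ) (k : Fin r) :
    ((j0 hE D f).1 (t : OnePoint ℝ)).1 k =
      ((t + Complex.I) ^ D k)⁻¹ * (toPoly (f.1 k)).eval (t : ℂ) := by
  rw [j0_apply]
  have hc := (Real.cos_arctan_pos t).ne'
  have hc' : (Real.cos (Real.arctan t) : ℂ) ^ D k ≠ 0 := pow_ne_zero _ (by exact_mod_cast hc)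
  simp only [toU, sec_coe]
  rw [hvec_eq _ hc, uu_arctan, Real.tan_arctan, mul_pow, mul_inv, mul_assoc,
    mul_left_comm, inv_mul_cancel_left₀ hc']

lemma t_add_I_ne (t : ℝ) : (t : ℂ) + Complex.I ≠ 0 := by
  intro h
  have := congrArg Complex.im h
  simp at this

lemma inj_of_eval {m : ℕ} {a : Fin m → ℂ}
    (h : ∀ l : Fin m, ∑ i : Fin m, a i * ((l : ℕ) : ℂ) ^ (i : ℕ) = 0) : a = 0 := by
  let P : Polynomial ℂ := ∑ i : Fin m, Polynomial.C (a i) * Polynomial.X ^ (i : ℕ)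
  have hdeg : P.degree < m := by
    refine (Polynomial.degree_sum_le _ _).trans_lt ?_
    rw [Finset.sup_lt_iff (by exact WithBot.bot_lt_coe m)]
    intro i _
    exact (Polynomial.degree_C_mul_X_pow_le _ _).trans_lt (by exact_mod_cast i.2)
  have hP : P = 0 := by
    by_contra hne
    have hinj : Function.Injective (fun l : Fin m => ((l : ℕ) : ℂ)) := fun x y hxy => by
      simpa [Fin.ext_iff] using hxy
    refine hne (Polynomial.eq_zero_of_natDegree_lt_card_of_eval_eq_zero P hinj (fun l => ?_) ?_)
    · simpa [P, Polynomial.eval_finsetSum] using h l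
    · rw [Fintype.card_fin]; exact (Polynomial.natDegree_lt_iff_degree_lt hne).2 hdeg
  ext i
  have := congrArg (fun Q => Polynomial.coeff Q (i : ℕ)) hP
  simp only [P, Polynomial.finsetSum_coeff, Polynomial.coeff_C_mul_X_pow,
    Polynomial.coeff_zero] at this
  rw [Finset.sum_eq_single i] at this
  · simpa using this
  · intro b _ hb
    rw [if_neg]; intro he; exact hb (Fin.ext he.symm)
  · simp

/-- Values of polynomials at integers. -/
def valMap (D : Fin r → ℕ) : (∀ k : Fin r, Fin (D k) → ℂ) →ₗ[ℂ] (∀ k : Fin r, Fin (D k) → ℂ) where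
  toFun a k l := ∑ i : Fin (D k), a k i * ((l : ℕ) : ℂ) ^ (i : ℕ)
  map_add' a b := by ext k l; simp [add_mul, Finset.sum_add_distrib]
  map_smul' c a := by ext k l; simp [mul_assoc, Finset.mul_sum]

lemma valMap_inj (D : Fin r → ℕ) : Function.Injective (valMap D) := by
  rw [← LinearMap.ker_eq_bot, LinearMap.ker_eq_bot']
  intro a ha
  ext1 k
  exact inj_of_eval fun l => congrFun (congrFun ha k) l

lemma j0_isEmbedding (hE : (∅ : Finset (Fin r)) ∈ K) :
    Topology.IsEmbedding (j0 hE D) := by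
  let G : Loop ↥(UK K) (onesUK hE) → (∀ k : Fin r, Fin (D k) → ℂ) := fun γ k l =>
    ((((l : ℕ) : ℝ) : ℂ) + Complex.I) ^ D k * (γ.1 ((((l : ℕ) : ℝ)) : OnePoint ℝ)).1 k -
      ((l : ℕ) : ℂ) ^ D k
  have hG : Continuous G := by
    refine continuous_pi fun k => continuous_pi fun l => ?_
    refine (continuous_const.mul ?_).sub continuous_const
    exact (continuous_apply k).comp ((continuous_loop_eval hE).comp
      (continuous_id.prodMk continuous_const))
  have hcomp : G ∘ j0 hE D = valMap D ∘ Subtype.val := by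
    ext f k l
    simp only [G, Function.comp, j0_coe]
    rw [mul_inv_cancel_left₀ (pow_ne_zero _ (t_add_I_ne _)), toPoly_eval]
    simp [valMap]
  have hemb : Topology.IsEmbedding (G ∘ j0 hE D) := by
    rw [hcomp]
    exact ((valMap D).isClosedEmbedding_of_injective
      (LinearMap.ker_eq_bot.2 (valMap_inj D))).isEmbedding.comp Topology.IsEmbedding.subtypeVal
  exact Topology.IsEmbedding.of_comp (j0 hE D).continuous hG hemb

lemma exists_lift_j0 (hE : (∅ : Finset (Fin r)) ∈ K) {X : Type*} [TopologicalSpace X]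
    (F : C(X, Loop ↥(UK K) (onesUK hE))) (h : ∀ x, F x ∈ Set.range (j0 hE D)) :
    ∃ g : C(X, ↥(PolSp K D)), (j0 hE D).comp g = F := by
  choose g hg using h
  refine ⟨⟨g, (j0_isEmbedding hE).continuous_iff.2 ?_⟩, ContinuousMap.ext hg⟩
  have : (j0 hE D) ∘ g = F := funext hg
  rw [this]; exact F.continuous

end loops

section concrete
variable {r : ℕ} {K : Set (Finset (Fin r))} {D : Fin r → ℕ}

lemma rmin_le_card {σ : Finset (Fin r)} (hσ : σ ∉ K) : rmin K ≤ σ.card := by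
  induction σ using Finset.strongInduction with
  | H σ ih =>
    by_cases h : ∀ t ⊂ σ, t ∈ K
    · exact Nat.sInf_le ⟨σ, ⟨hσ, h⟩, rfl⟩
    · push Not at h
      obtain ⟨t, ht, htK⟩ := h
      exact (ih t ht htK).trans (Finset.card_le_card ht.subset)

lemma dmin_le (D : Fin r → ℕ) (k : Fin r) : dmin D ≤ D k := Nat.sInf_le ⟨k, rfl⟩

lemma interp_tan (m d : ℕ) (hd : d ≤ m) (S : Finset ℝ)
    (hS : ∀ t ∈ S, -(Real.pi / 2) < t ∧ t < Real.pi / 2) (hc : S.card ≤ d) (y : ℝ → ℝ) :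
    ∃ w : Fin m → ℝ, ∀ t ∈ S,
      ∑ l, w l * (Real.sin t ^ (l : ℕ) * Real.cos t ^ (m - l)) = y t := by
  have hinj : Set.InjOn Real.tan S := fun a ha b hb hab =>
    Real.injOn_tan (hS a ha) (hS b hb) hab
  let P := Lagrange.interpolate S Real.tan (fun t => y t / Real.cos t ^ m)
  have hdeg : P.degree < m := (Lagrange.degree_interpolate_lt _ hinj).trans_le
    (by exact_mod_cast hc.trans hd)
  refine ⟨fun l => P.coeff l, fun t ht => ?_⟩
  have hcos := (Real.cos_pos_of_mem_Ioo (hS t ht)).ne'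
  have hev : P.eval (Real.tan t) = y t / Real.cos t ^ m :=
    Lagrange.eval_interpolate_at_node _ hinj ht
  have hsum : P.eval (Real.tan t) = ∑ l : Fin m, P.coeff l * Real.tan t ^ (l : ℕ) := by
    rcases Nat.eq_zero_or_pos m with h0 | h0
    · subst h0
      have : P = 0 := by
        rw [← Polynomial.degree_eq_bot]
        by_contra hne
        have := Polynomial.zero_le_degree_iff.2 (fun h : P = 0 => hne (by simp [h]))
        exact absurd (this.trans_lt hdeg) (by simp)
      simp [this]
    · rw [Polynomial.eval_eq_sum_range' (n := m), Finset.sum_range]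
      by_cases hP : P = 0
      · simpa [hP] using h0
      · exact (Polynomial.natDegree_lt_iff_degree_lt hP).2 hdeg
  rw [hsum] at hev
  rw [eq_div_iff (pow_ne_zero _ hcos), Finset.sum_mul] at hev
  rw [← hev]
  refine Finset.sum_congr rfl fun l _ => ?_
  rw [Real.tan_eq_sin_div_cos, div_pow]
  have : Real.cos t ^ m = Real.cos t ^ (l : ℕ) * Real.cos t ^ (m - l) := by
    rw [← pow_add]; congr 1; omega
  rw [this]
  field_simp

/-- The concrete data. -/
def CD (K : Set (Finset (Fin r))) (D : Fin r → ℕ) (hr : 2 ≤ rmin K) :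
    CoreData (Fin r × Bool) where
  D i := D i.1
  e i := fun t => if i.2 then 0 else Real.sin t ^ D i.1
  φ i l := fun t => Real.sin t ^ (l : ℕ) * Real.cos t ^ (D i.1 - l)
  A := -(Real.pi / 2)
  B := Real.pi / 2
  hAB := by linarith [Real.pi_pos]
  NF := {ν | ∃ σ : Finset (Fin r), σ ∉ K ∧ ν = σ ×ˢ Finset.univ}
  d := dmin D
  ρ := 2 * rmin K
  e_smooth i := by
    cases i.2
    · simpa using Real.contDiff_sin.pow _
    · simpa using contDiff_const
  φ_smooth i l := (Real.contDiff_sin.pow _).mul (Real.contDiff_cos.pow _)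
  φA i l := by
    have : (0 : ℝ) ^ (D i.1 - l) = 0 := zero_pow (by omega)
    simp [this]
  φB i l := by
    have : (0 : ℝ) ^ (D i.1 - l) = 0 := zero_pow (by omega)
    simp [this]
  interp i S hS hc y := interp_tan _ _ (dmin_le D i.1) S hS hc y
  card_NF := by
    rintro ν ⟨σ, hσ, rfl⟩
    have := rmin_le_card hσ
    simp; omega
  pA i := if i.2 then 0 else (-1) ^ D i.1
  pB i := if i.2 then 0 else 1
  eA i := by simp
  eB i := by simp
  endA := by
    rintro ν ⟨σ, hσ, rfl⟩ i hi
    have := rmin_le_card hσ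
    obtain ⟨k, hk, hki⟩ := Finset.exists_mem_ne (s := σ) (by omega) i.1
    exact ⟨(k, false), by simpa using hk, fun h => hki (by rw [← h]), by simp⟩
  endB := by
    rintro ν ⟨σ, hσ, rfl⟩ i hi
    have := rmin_le_card hσ
    obtain ⟨k, hk, hki⟩ := Finset.exists_mem_ne (s := σ) (by omega) i.1
    exact ⟨(k, false), by simpa using hk, fun h => hki (by rw [← h]), by simp⟩

/-- Real coordinates to complex coordinates. -/
def cv (y : Fin r × Bool → ℝ) : Fin r → ℂ := fun k => ⟨y (k, false), y (k, true)⟩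

/-- Complex coordinates to real coordinates. -/
def rv (y : Fin r → ℂ) : Fin r × Bool → ℝ := fun i => if i.2 then (y i.1).im else (y i.1).re

lemma cv_rv (y : Fin r → ℂ) : cv (rv y) = y := by ext k <;> simp [cv, rv]

lemma continuous_cv : Continuous (cv (r := r)) := by
  refine continuous_pi fun k => ?_
  have : (fun y : Fin r × Bool → ℝ => cv y k) =
      fun y => (y (k, false) : ℂ) + (y (k, true) : ℂ) * Complex.I := by
    ext y; exact (Complex.mk_eq_add_mul_I _ _)
  rw [this]
  fun_prop

lemma continuous_rv : Continuous (rv (r := r)) := by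
  refine continuous_pi fun i => ?_
  rcases i with ⟨k, b⟩
  cases b
  · have := Complex.continuous_re.comp (continuous_apply k : Continuous fun a : Fin r → ℂ => a k)
    simpa [rv, Function.comp_def] using this
  · have := Complex.continuous_im.comp (continuous_apply k : Continuous fun a : Fin r → ℂ => a k)
    simpa [rv, Function.comp_def] using this

set_option linter.unusedSectionVars false
variable (hr : 2 ≤ rmin K)

lemma good_iff (y : Fin r × Bool → ℝ) : (CD K D hr).Good y ↔ cv y ∈ UK K := by
  rw [mem_UK]
  constructor
  · intro h σ hσ
    obtain ⟨⟨k, b⟩, hk, hne⟩ := h _ ⟨σ, hσ, rfl⟩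
    refine ⟨k, by simpa using hk, fun h0 => hne ?_⟩
    cases b
    · exact congrArg Complex.re h0
    · exact congrArg Complex.im h0
  · rintro h ν ⟨σ, hσ, rfl⟩
    obtain ⟨k, hk, hne⟩ := h σ hσ
    by_contra hcon
    push Not at hcon
    exact hne (Complex.ext (hcon (k, false) (by simpa using hk))
      (hcon (k, true) (by simpa using hk)))

lemma cv_pA (k : Fin r) : cv (CD K D hr).pA k = (-1) ^ D k := by
  apply Complex.ext
  · simp only [cv, CD]
    have : ((-1 : ℂ)) ^ D k = (((-1 : ℝ) ^ D k : ℝ) : ℂ) := by push_cast; rfl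
    rw [this, Complex.ofReal_re]; simp
  · simp only [cv, CD]
    have : ((-1 : ℂ)) ^ D k = (((-1 : ℝ) ^ D k : ℝ) : ℂ) := by push_cast; rfl
    rw [this, Complex.ofReal_im]; simp

lemma cv_pB (k : Fin r) : cv (CD K D hr).pB k = 1 := by
  apply Complex.ext <;> simp [cv, CD]

lemma rv_cv (y : Fin r × Bool → ℝ) : rv (cv y) = y := by
  ext ⟨k, b⟩
  cases b <;> simp [cv, rv]

variable {E : Type} [NormedAddCommGroup E] [NormedSpace ℝ E] [FiniteDimensional ℝ E]

lemma cfam_of_fam {h : E × ℝ → Fin r × Bool → ℝ} (H : (CD K D hr).Fam h) :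
    CFam K D (fun z => cv (h z)) where
  cont := continuous_cv.comp H.cont
  good x θ hθ := (good_iff hr _).1 (H.good x θ hθ)
  hA x k := by
    have := H.hA x
    change h (x, -(Real.pi / 2)) = _ at this
    rw [this]; exact cv_pA hr k
  hB x k := by
    have := H.hB x
    change h (x, (Real.pi / 2)) = _ at this
    rw [this]; exact cv_pB hr k

lemma fam_of_cfam {h : E × ℝ → Fin r → ℂ} (H : CFam K D h) :
    (CD K D hr).Fam (fun z => rv (h z)) where
  cont := continuous_rv.comp H.cont
  good x θ hθ := (good_iff hr _).2 (by rw [cv_rv]; exact H.good x θ hθ)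
  hA x := by
    have : h (x, -(Real.pi / 2)) = cv (CD K D hr).pA := by
      ext1 k; rw [H.hA, cv_pA]
    change rv (h (x, -(Real.pi / 2))) = _
    rw [this, rv_cv]
  hB x := by
    have : h (x, (Real.pi / 2)) = cv (CD K D hr).pB := by
      ext1 k; rw [H.hB, cv_pB]
    change rv (h (x, (Real.pi / 2))) = _
    rw [this, rv_cv]

lemma homotopicRel_of_step (hE : (∅ : Finset (Fin r)) ∈ K) {S : Set E}
    {h h' : E × ℝ → Fin r × Bool → ℝ} (H : (CD K D hr).Step S h h')
    (F F' : C(E, Loop ↥(UK K) (onesUK hE)))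
    (hF : ∀ x p, ((F x).1 p).1 = toU D (fun z => cv (h z)) x p)
    (hF' : ∀ x p, ((F' x).1 p).1 = toU D (fun z => cv (h' z)) x p) :
    F.HomotopicRel F' Sᶜ := by
  let hh : (unitInterval × E) × ℝ → Fin r → ℂ := fun z =>
    cv (h (z.1.2, z.2) + (z.1.1 : ℝ) • (h' (z.1.2, z.2) - h (z.1.2, z.2)))
  have hcf : CFam K D hh := by
    refine ⟨continuous_cv.comp ?_, ?_, ?_, ?_⟩
    · have c1 : Continuous fun z : (unitInterval × E) × ℝ => (z.1.2, z.2) :=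
        (continuous_snd.comp continuous_fst).prodMk continuous_snd
      have c2 : Continuous fun z : (unitInterval × E) × ℝ => (z.1.1 : ℝ) :=
        continuous_subtype_val.comp (continuous_fst.comp continuous_fst)
      exact (H.fam.cont.comp c1).add (c2.smul ((H.fam'.cont.comp c1).sub (H.fam.cont.comp c1)))
    · intro x θ hθ
      exact (good_iff hr _).1 (H.seg x.1 x.1.2 x.2 θ hθ)
    · intro x k
      have e1 := H.fam.hA x.2
      have e2 := H.fam'.hA x.2
      change h (x.2, -(Real.pi / 2)) = _ at e1
      change h' (x.2, -(Real.pi / 2)) = _ at e2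
      simp only [hh, e1, e2, sub_self, smul_zero, add_zero]
      exact cv_pA hr k
    · intro x k
      have e1 := H.fam.hB x.2
      have e2 := H.fam'.hB x.2
      change h (x.2, (Real.pi / 2)) = _ at e1
      change h' (x.2, (Real.pi / 2)) = _ at e2
      simp only [hh, e1, e2, sub_self, smul_zero, add_zero]
      exact cv_pB hr k
  obtain ⟨G, hG⟩ := hcf.exists_loop hE
  refine ⟨⟨⟨G, ?_, ?_⟩, ?_⟩⟩
  · intro x
    refine loop_ext fun p => ?_
    rw [hF]
    refine (hG _ p).trans ?_
    ext k; simp [toU, hh]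
  · intro x
    refine loop_ext fun p => ?_
    rw [hF']
    refine (hG _ p).trans ?_
    ext k; simp [toU, hh]
  · intro s x hx
    refine loop_ext fun p => ?_
    rw [hF]
    refine (hG _ p).trans ?_
    have := H.off x hx (sec p) (sec_mem p)
    ext k; simp [toU, hh, this]

lemma famOf_j0 (hE : (∅ : Finset (Fin r)) ∈ K) {X : Type*} (F : X → Loop ↥(UK K) (onesUK hE))
    (x : X) (f : ↥(PolSp K D)) (hf : j0 hE D f = F x) {θ : ℝ}
    (hθ : θ ∈ Set.Icc (-(Real.pi / 2)) (Real.pi / 2)) :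
    famOf D F (x, θ) = hvec D f.1 θ := by
  ext k
  simp only [famOf]
  rw [← hf, j0_apply, (hvec_cfam hE).toU_kap f hθ]
  exact mul_inv_cancel_left₀ (pow_ne_zero _ (uu_ne _)) _

lemma polyAt_hvec (a : ∀ k : Fin r, Fin (D k) → ℂ) (i : Fin r × Bool) :
    ∃ w, ∀ t, rv (hvec D a t) i = (CD K D hr).e i t + (CD K D hr).ev i w t := by
  rcases i with ⟨k, b⟩
  have e1 : ∀ (t : ℝ) (l : Fin (D k)),
      (Real.sin t : ℂ) ^ (l : ℕ) * (Real.cos t : ℂ) ^ (D k - l) =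
      ((Real.sin t ^ (l : ℕ) * Real.cos t ^ (D k - l) : ℝ) : ℂ) := fun t l => by push_cast; rfl
  have e2 : ∀ t : ℝ, (Real.sin t : ℂ) ^ D k = ((Real.sin t ^ D k : ℝ) : ℂ) :=
    fun t => by push_cast; rfl
  cases b
  · refine ⟨fun l => (a k l).re, fun t => ?_⟩
    simp only [rv, hvec, CD, CoreData.ev, e1, e2]
    simp only [Bool.false_eq_true, if_false, Complex.add_re, Complex.re_sum, Complex.re_mul_ofReal,
      Complex.ofReal_re]
    rfl
  · refine ⟨fun l => (a k l).im, fun t => ?_⟩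
    simp only [rv, hvec, CD, CoreData.ev, e1, e2]
    simp only [if_true, Complex.add_im, Complex.im_sum, Complex.im_mul_ofReal,
      Complex.ofReal_im]
    rfl

lemma hvec_of_polyAt {y : ℝ → Fin r × Bool → ℝ} {S : Set ℝ}
    (h : ∀ i, ∃ w, ∀ t ∈ S, y t i = (CD K D hr).e i t + (CD K D hr).ev i w t) :
    ∃ a : ∀ k : Fin r, Fin (D k) → ℂ, ∀ t ∈ S, cv (y t) = hvec D a t := by
  choose w hw using h
  refine ⟨fun k l => ⟨w (k, false) l, w (k, true) l⟩, fun t ht => ?_⟩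
  ext1 k
  have e1 : ∀ (l : Fin (D k)),
      (Real.sin t : ℂ) ^ (l : ℕ) * (Real.cos t : ℂ) ^ (D k - l) =
      ((Real.sin t ^ (l : ℕ) * Real.cos t ^ (D k - l) : ℝ) : ℂ) := fun l => by push_cast; rfl
  have e2 : (Real.sin t : ℂ) ^ D k = ((Real.sin t ^ D k : ℝ) : ℂ) := by push_cast; rfl
  apply Complex.ext
  · simp only [cv, hw _ t ht, hvec, CD, CoreData.ev, e1, e2]
    simp only [Bool.false_eq_true, if_false, Complex.add_re, Complex.re_sum, Complex.re_mul_ofReal,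
      Complex.ofReal_re]
    rfl
  · simp only [cv, hw _ t ht, hvec, CD, CoreData.ev, e1, e2]
    simp only [if_true, Complex.add_im, Complex.im_sum, Complex.im_mul_ofReal,
      Complex.ofReal_im]
    rfl

/-- The deformation theorem for families of loops. -/
theorem core_loops (hr : 2 ≤ rmin K) (hE : (∅ : Finset (Fin r)) ∈ K)
    (hdim : Module.finrank ℝ E < dmin D * (2 * rmin K - 2))
    (F : C(E, Loop ↥(UK K) (onesUK hE))) (c : E) {r0 r1 : ℝ} (h0 : 0 < r0) (h01 : r0 < r1)
    (hF : ∀ x, x ∉ Metric.closedBall c r0 → F x ∈ Set.range (j0 hE D)) :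
    ∃ g : C(E, ↥(PolSp K D)), F.HomotopicRel ((j0 hE D).comp g) (Metric.ball c r1)ᶜ := by
  obtain ⟨h', hrel, hfam, hpoly⟩ := (CD K D hr).core (fam_of_cfam hr (famOf_cfam (D := D) F)) c h0
    h01 hdim (by
      intro x hx i
      obtain ⟨f, hf⟩ := hF x hx
      obtain ⟨w, hw⟩ := polyAt_hvec hr f.1 i
      refine ⟨w, fun t ht => ?_⟩
      simp only []
      rw [famOf_j0 hE F x f hf ht]
      exact hw t)
  obtain ⟨F', hF'⟩ := (cfam_of_fam hr hfam).exists_loop hE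
  have hhom : ∀ h₁, Relation.ReflTransGen ((CD K D hr).Step (Metric.ball c r1))
      (fun z => rv (famOf D F z)) h₁ → ∀ F₁ : C(E, Loop ↥(UK K) (onesUK hE)),
      (∀ x p, ((F₁ x).1 p).1 = toU D (fun z => cv (h₁ z)) x p) →
      F.HomotopicRel F₁ (Metric.ball c r1)ᶜ := by
    intro h₁ hr₁
    induction hr₁ with
    | refl =>
      intro F₁ hF₁
      have : F₁ = F := by
        ext x
        refine loop_ext fun p => ?_
        rw [hF₁]
        simp only [cv_rv]
        exact toU_famOf F x p
      rw [this]
      exact ContinuousMap.HomotopicRel.refl _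
    | tail _ hst ih =>
      intro F₁ hF₁
      obtain ⟨F₂, hF₂⟩ := (cfam_of_fam hr hst.fam).exists_loop hE
      exact (ih F₂ hF₂).trans (homotopicRel_of_step hr hE hst F₂ F₁ hF₂ hF₁)
  have hrange : ∀ x, F' x ∈ Set.range (j0 hE D) := by
    intro x
    obtain ⟨a, ha⟩ := hvec_of_polyAt hr (y := fun t => h' (x, t)) (hpoly x)
    have hmem : a ∈ PolSp K D := by
      intro σ hσ t
      have hI : Real.arctan t ∈ Set.Icc (-(Real.pi / 2)) (Real.pi / 2) := by
        simpa using sec_mem (t : OnePoint ℝ)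
      have h1 := (good_iff hr _).1 (hfam.good x (Real.arctan t) hI)
      rw [ha _ hI] at h1
      obtain ⟨k, hk, hne⟩ := mem_UK.1 h1 σ hσ
      rw [hvec_eq _ (Real.cos_arctan_pos t).ne', Real.tan_arctan] at hne
      exact ⟨k, hk, right_ne_zero_of_mul hne⟩
    refine ⟨⟨a, hmem⟩, loop_ext fun p => ?_⟩
    rw [j0_apply, hF']
    ext k
    simp only [toU]
    rw [ha _ (sec_mem p)]
  obtain ⟨g, hg⟩ := exists_lift_j0 hE F' hrange
  exact ⟨g, by rw [hg]; exact hhom h' hrel F' hF'⟩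

end concrete

section cubes
open unitInterval

/-- Stretching of the real line onto the unit interval. -/
def str1 (y : ℝ) : I := Set.projIcc 0 1 zero_le_one (2 * y - 1 / 2)

lemma continuous_str1 : Continuous str1 := continuous_projIcc.comp (by fun_prop)

lemma str1_eq (y : ℝ) (h : y ∉ Metric.closedBall (1 / 2 : ℝ) (1 / 4)) : str1 y = 0 ∨ str1 y = 1 := by
  rw [Metric.mem_closedBall, Real.dist_eq, abs_le, not_and_or] at h
  rcases h with h | h
  · left; exact Set.projIcc_of_le_left _ (by linarith)
  · right; exact Set.projIcc_of_right_le _ (by linarith)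

lemma str1_zero : str1 0 = 0 := Set.projIcc_of_le_left _ (by norm_num)
lemma str1_one : str1 1 = 1 := Set.projIcc_of_right_le _ (by norm_num)

variable {k : ℕ}

/-- Stretching of the space onto the cube. -/
def str (y : Fin k → ℝ) : Fin k → I := fun i => str1 (y i)

lemma continuous_str : Continuous (str (k := k)) :=
  continuous_pi fun i => continuous_str1.comp (continuous_apply i)

lemma str_mem (y : Fin k → ℝ) (h : y ∉ Metric.closedBall (fun _ => (1 / 2 : ℝ)) (1 / 4)) :
    str y ∈ Cube.boundary (Fin k) := by
  rw [Metric.mem_closedBall, dist_pi_le_iff (by norm_num)] at h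
  push Not at h
  obtain ⟨i, hi⟩ := h
  exact ⟨i, str1_eq _ (by simpa using hi)⟩

/-- Inclusion of the cube. -/
def inc (y : Fin k → I) : Fin k → ℝ := fun i => (y i : ℝ)

lemma continuous_inc : Continuous (inc (k := k)) :=
  continuous_pi fun i => continuous_subtype_val.comp (continuous_apply i)

lemma inc_not_mem {y : Fin k → I} (hy : y ∈ Cube.boundary (Fin k)) :
    inc y ∉ Metric.ball (fun _ => (1 / 2 : ℝ)) (1 / 2) := by
  obtain ⟨i, hi⟩ := hy
  rw [Metric.mem_ball, dist_pi_lt_iff (by norm_num)]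
  intro h
  have := h i
  rw [Real.dist_eq] at this
  rcases hi with hi | hi <;> norm_num [inc, hi, abs_lt] at this

lemma str_inc_mem {y : Fin k → I} (hy : y ∈ Cube.boundary (Fin k)) :
    str (inc y) ∈ Cube.boundary (Fin k) := by
  obtain ⟨i, hi⟩ := hy
  refine ⟨i, ?_⟩
  rcases hi with hi | hi
  · left; simp [str, inc, hi, str1_zero]
  · right; simp [str, inc, hi, str1_one]

/-- The stretching self-map of the cube. -/
def stretch (k : ℕ) : C(Fin k → I, Fin k → I) :=
  ⟨fun y => str (inc y), continuous_str.comp continuous_inc⟩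

lemma stretch_homotopic {X : Type*} [TopologicalSpace X] (p : C(Fin k → I, X)) (x0 : X)
    (hp : ∀ y ∈ Cube.boundary (Fin k), p y = x0) :
    p.HomotopicRel (p.comp (stretch k)) (Cube.boundary (Fin k)) := by
  have hconv : ∀ (s a b : I), (1 - (s : ℝ)) * a + s * b ∈ I := fun s a b =>
    (convex_Icc (0 : ℝ) 1) a.2 b.2 (by linarith [s.2.2]) s.2.1 (by ring)
  let q : I × (Fin k → I) → (Fin k → I) := fun z i =>
    ⟨(1 - (z.1 : ℝ)) * (z.2 i : ℝ) + z.1 * (stretch k z.2 i : ℝ), hconv _ _ _⟩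
  have hq : Continuous q := by
    refine continuous_pi fun i => Continuous.subtype_mk ?_ _
    have c1 : Continuous fun z : I × (Fin k → I) => (z.1 : ℝ) :=
      continuous_subtype_val.comp continuous_fst
    have c2 : Continuous fun z : I × (Fin k → I) => (z.2 i : ℝ) :=
      continuous_subtype_val.comp ((continuous_apply i).comp continuous_snd)
    have c3 : Continuous fun z : I × (Fin k → I) => (stretch k z.2 i : ℝ) :=
      continuous_subtype_val.comp
        ((continuous_apply i).comp ((stretch k).continuous.comp continuous_snd))
    exact ((continuous_const.sub c1).mul c2).add (c1.mul c3)
  refine ⟨⟨⟨⟨fun z => p (q z), p.continuous.comp hq⟩, ?_, ?_⟩, ?_⟩⟩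
  · intro y
    show p (q (0, y)) = p y
    congr 1; ext i; simp [q]
  · intro y
    show p (q (1, y)) = p (stretch k y)
    congr 1; ext i; simp [q]
  · intro s y hy
    show p (q (s, y)) = p y
    rw [hp y hy]
    refine hp _ ?_
    obtain ⟨i, hi⟩ := hy
    refine ⟨i, ?_⟩
    rcases hi with hi | hi
    · left; ext; simp [q, stretch, str, inc, hi, str1_zero]
    · right; ext; simp [q, stretch, str, inc, hi, str1_one]

/-- Raw surjectivity on homotopy groups. -/
def RawSurj {X Y : Type*} [TopologicalSpace X] [TopologicalSpace Y] (j : C(X, Y)) (x : X)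
    (k : ℕ) : Prop :=
  ∀ p : C(Fin k → I, Y), (∀ y ∈ Cube.boundary (Fin k), p y = j x) →
    ∃ g : C(Fin k → I, X), (∀ y ∈ Cube.boundary (Fin k), g y = x) ∧
      (j.comp g).HomotopicRel p (Cube.boundary (Fin k))

/-- Raw injectivity on homotopy groups. -/
def RawInj {X Y : Type*} [TopologicalSpace X] [TopologicalSpace Y] (j : C(X, Y)) (x : X)
    (k : ℕ) : Prop :=
  ∀ p0 p1 : C(Fin k → I, X), (∀ y ∈ Cube.boundary (Fin k), p0 y = x) →
    (∀ y ∈ Cube.boundary (Fin k), p1 y = x) →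
    (j.comp p0).HomotopicRel (j.comp p1) (Cube.boundary (Fin k)) →
    p0.HomotopicRel p1 (Cube.boundary (Fin k))

lemma bijective_piMap {X Y : Type*} [TopologicalSpace X] [TopologicalSpace Y] (j : C(X, Y)) (x : X)
    (k : ℕ) (hs : RawSurj j x k) (hi : RawInj j x k) : Function.Bijective (piMap k j x) := by
  constructor
  · intro a b
    refine Quotient.inductionOn₂ a b fun p0 p1 h => ?_
    exact Quotient.sound (hi p0.1 p1.1 p0.2 p1.2 (Quotient.exact h))
  · intro b
    refine Quotient.inductionOn b fun p => ?_
    obtain ⟨g, hg, hh⟩ := hs p.1 p.2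
    exact ⟨Quotient.mk _ ⟨g, hg⟩, Quotient.sound hh⟩

variable {r : ℕ} {K : Set (Finset (Fin r))} {D : Fin r → ℕ}

theorem rawSurj_j0 (hr : 2 ≤ rmin K) (hE : (∅ : Finset (Fin r)) ∈ K)
    (hdim : k < dmin D * (2 * rmin K - 2)) (f0 : ↥(PolSp K D)) : RawSurj (j0 hE D) f0 k := by
  intro p hp
  let F : C(Fin k → ℝ, Loop ↥(UK K) (onesUK hE)) := ⟨fun y => p (str y), p.continuous.comp continuous_str⟩
  obtain ⟨g, ⟨hg⟩⟩ := core_loops (D := D) (E := Fin k → ℝ) hr hE (by simpa using hdim) F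
    (fun _ => (1 / 2 : ℝ)) (r0 := 1 / 4) (r1 := 1 / 2) (by norm_num) (by norm_num)
    (fun x hx => ⟨f0, (hp _ (str_mem x hx)).symm⟩)
  have hincl : Continuous fun z : I × (Fin k → I) => (z.1, inc z.2) :=
    continuous_fst.prodMk (continuous_inc.comp continuous_snd)
  have hb : ∀ y ∈ Cube.boundary (Fin k), g (inc y) = f0 := by
    intro y hy
    apply (j0_isEmbedding hE (D := D)).injective
    have e := hg.eq_snd 1 (inc_not_mem hy)
    have e' := hg.eq_fst 1 (inc_not_mem hy)
    rw [← hp _ (str_inc_mem hy)]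
    exact e.symm.trans e'
  refine ⟨g.comp ⟨inc, continuous_inc⟩, hb, ?_⟩
  refine ContinuousMap.HomotopicRel.symm ?_
  refine (stretch_homotopic p _ hp).trans ?_
  refine ⟨⟨⟨⟨fun z => hg (z.1, inc z.2), hg.continuous.comp hincl⟩, ?_, ?_⟩, ?_⟩⟩
  · intro y; exact hg.apply_zero _
  · intro y; exact hg.apply_one _
  · intro s y hy; exact hg.eq_fst s (inc_not_mem hy)

theorem rawInj_j0 (hr : 2 ≤ rmin K) (hE : (∅ : Finset (Fin r)) ∈ K)
    (hdim : k + 1 < dmin D * (2 * rmin K - 2)) (f0 : ↥(PolSp K D)) : RawInj (j0 hE D) f0 k := by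
  rintro p0 p1 hp0 hp1 ⟨H⟩
  let F : C(ℝ × (Fin k → ℝ), Loop ↥(UK K) (onesUK hE)) :=
    ⟨fun z => H (str1 z.1, str z.2), H.continuous.comp
      ((continuous_str1.comp continuous_fst).prodMk (continuous_str.comp continuous_snd))⟩
  have hH0 : ∀ y, H (0, y) = j0 hE D (p0 y) := fun y => H.apply_zero y
  have hH1 : ∀ y, H (1, y) = j0 hE D (p1 y) := fun y => H.apply_one y
  have hHb : ∀ s, ∀ y ∈ Cube.boundary (Fin k), H (s, y) = j0 hE D f0 := fun s y hy => by
    rw [← hp0 y hy]; exact H.eq_fst s hy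
  obtain ⟨g, ⟨hg⟩⟩ := core_loops (D := D) (E := ℝ × (Fin k → ℝ)) hr hE
    (by simpa [add_comm] using hdim) F
    ((1 / 2 : ℝ), fun _ => (1 / 2 : ℝ)) (r0 := 1 / 4) (r1 := 1 / 2) (by norm_num) (by norm_num)
    (by
      rintro ⟨s, y⟩ hx
      rw [← closedBall_prod_same, Set.mem_prod, not_and_or] at hx
      rcases hx with hx | hx
      · rcases str1_eq s hx with h | h
        · refine ⟨p0 (str y), ?_⟩
          show _ = H (str1 s, str y)
          rw [h, hH0]
        · refine ⟨p1 (str y), ?_⟩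
          show _ = H (str1 s, str y)
          rw [h, hH1]
      · exact ⟨f0, (hHb _ _ (str_mem y hx)).symm⟩)
  have key : ∀ s y, (s, y) ∉ Metric.ball ((1 / 2 : ℝ), fun _ : Fin k => (1 / 2 : ℝ)) (1 / 2) →
      j0 hE D (g (s, y)) = H (str1 s, str y) := by
    intro s y hy
    exact (hg.eq_snd 1 hy).symm.trans (hg.eq_fst 1 hy)
  have inj := (j0_isEmbedding hE (D := D)).injective
  have g0 : ∀ y, g (0, y) = p0 (str y) := by
    intro y
    apply inj
    rw [key, str1_zero, hH0]
    rw [← ball_prod_same, Set.mem_prod, not_and_or]; left; norm_num [Real.dist_eq]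
  have g1 : ∀ y, g (1, y) = p1 (str y) := by
    intro y
    apply inj
    rw [key, str1_one, hH1]
    rw [← ball_prod_same, Set.mem_prod, not_and_or]; left; norm_num [Real.dist_eq]
  have gb : ∀ s, ∀ y ∈ Cube.boundary (Fin k), g (s, inc y) = f0 := by
    intro s y hy
    apply inj
    rw [key, hHb _ _ (str_inc_mem hy)]
    rw [← ball_prod_same, Set.mem_prod, not_and_or]; right; exact inc_not_mem hy
  refine (stretch_homotopic p0 _ hp0).trans (ContinuousMap.HomotopicRel.trans ?_
    (stretch_homotopic p1 _ hp1).symm)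
  have hincl : Continuous fun z : I × (Fin k → I) => ((z.1 : ℝ), inc z.2) :=
    (continuous_subtype_val.comp continuous_fst).prodMk (continuous_inc.comp continuous_snd)
  refine ⟨⟨⟨⟨fun z => g (z.1, inc z.2), g.continuous.comp hincl⟩, ?_, ?_⟩, ?_⟩⟩
  · intro y; exact g0 _
  · intro y; exact g1 _
  · intro s y hy
    exact (gb s y hy).trans (hp0 _ (str_inc_mem hy)).symm

end cubes

section toricgroup
variable {n r : ℕ} {F : Fan n} {N : Fin r → Fin n → ℤ}

lemma zr_smul (c : ℤ) (v : Fin n → ℤ) : zr (c • v) = (c : ℝ) • zr v := by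
  ext i; simp [zr]

lemma zr_inj {v w : Fin n → ℤ} (h : zr v = zr w) : v = w := by
  ext i; have := congrFun h i; simpa [zr] using this

lemma gen_is_basis (hPG : IsPrimGens F N) (σ : Finset (Fin r))
    (hσ : coneIdx N σ ∈ F.cones) (b : Module.Basis (Fin n) ℤ (Fin n → ℤ)) (s : Finset (Fin n))
    (hb : coneIdx N σ = {x | ∃ lam : Fin n → ℝ, (∀ i, 0 ≤ lam i) ∧ x = ∑ i ∈ s, lam i • zr (b i)})
    (i : Fin r) (hi : i ∈ σ) : ∃ l, N i = b l := by
  have hray : ray (zr (N i)) ⊆ coneIdx N σ := by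
    rintro x ⟨t, ht, rfl⟩
    refine ⟨fun k => if k = i then t else 0, fun k => by dsimp only; split_ifs <;> simp [ht], ?_⟩
    simp [ite_smul, hi]
  obtain ⟨L, hL, hface⟩ := F.inter_face _ hσ _ (hPG.ray_mem i)
  rw [Set.inter_eq_right.2 hray] at hface
  have hmem : zr (N i) ∈ ray (zr (N i)) := ⟨1, zero_le_one, by simp⟩
  have hL0 : L (zr (N i)) = 0 := by
    have := hmem
    rw [hface] at this
    exact this.2
  have hc := hray hmem
  rw [hb] at hc
  obtain ⟨lam, hlam, hx⟩ := hc
  have hbs : ∀ l ∈ s, zr (b l) ∈ coneIdx N σ := by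
    intro l hl
    rw [hb]
    refine ⟨fun k => if k = l then 1 else 0, fun k => by dsimp only; split_ifs <;> simp, ?_⟩
    simp [ite_smul, hl]
  have hsum : ∑ l ∈ s, lam l * L (zr (b l)) = 0 := by
    rw [← hL0, hx]; simp
  have hz := (Finset.sum_eq_zero_iff_of_nonneg
    (fun l hl => mul_nonneg (hlam l) (hL _ (hbs l hl)))).1 hsum
  obtain ⟨l, hl, hne⟩ : ∃ l ∈ s, lam l ≠ 0 := by
    by_contra hcon
    push Not at hcon
    have : zr (N i) = zr 0 := by
      rw [hx, Finset.sum_eq_zero (fun l hl => by rw [hcon l hl, zero_smul])]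
      ext; simp [zr]
    exact hPG.ne_zero i (zr_inj this)
  have hLb : L (zr (b l)) = 0 := (mul_eq_zero.1 (hz l hl)).resolve_left hne
  have hbr : zr (b l) ∈ ray (zr (N i)) := by rw [hface]; exact ⟨hbs l hl, hLb⟩
  have hlat : zr (b l) ∈ ray (zr (N i)) ∩ {x | IsLatticePoint x} :=
    ⟨hbr, fun k => ⟨b l k, rfl⟩⟩
  rw [hPG.primitive i] at hlat
  obtain ⟨c, hcx⟩ := hlat
  have hcN : b l = (c : ℤ) • N i := by
    apply zr_inj; rw [zr_smul, hcx]; simp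
  have h1 : (1 : ℤ) = c * b.repr (N i) l := by
    have := congrArg (fun v => b.repr v l) hcN
    rw [map_smul] at this
    simpa using this
  have hc1 : c = 1 := by
    have : (c : ℤ) ∣ 1 := ⟨_, h1⟩
    have := Int.natAbs_dvd_natAbs.2 this
    simpa using this
  refine ⟨l, ?_⟩
  rw [hcN, hc1]; simp

lemma exists_dual (hPG : IsPrimGens F N) (hNS : F.NonSingular) {σ : Finset (Fin r)}
    (hσ : σ ∈ KC F N) (i : Fin r) (hi : i ∈ σ) :
    ∃ m : Fin n → ℤ, ∑ j, N i j * m j = 1 ∧ ∀ k ∈ σ, k ≠ i → ∑ j, N k j * m j = 0 := by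
  obtain ⟨b, s, hb⟩ := hNS _ hσ
  haveI : Nonempty (Fin n) := ⟨(gen_is_basis hPG σ hσ b s hb i hi).choose⟩
  choose! l hl using gen_is_basis hPG σ hσ b s hb
  have key : ∀ v : Fin n → ℤ, ∑ j, v j * b.repr (Pi.single j 1) (l i) = b.repr v (l i) := by
    intro v
    conv_rhs => rw [← Finset.univ_sum_single v]
    rw [map_sum, Finsupp.finset_sum_apply]
    refine Finset.sum_congr rfl fun j _ => ?_
    have : (Pi.single j (v j) : Fin n → ℤ) = v j • Pi.single j 1 := by
      rw [← Pi.single_smul]; simp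
    rw [this, map_smul]; simp
  refine ⟨fun j => b.repr (Pi.single j 1) (l i), ?_, ?_⟩
  · rw [key, hl i hi]; simp
  · intro k hk hki
    rw [key, hl k hk]
    have : l k ≠ l i := fun h => hki (hPG.inj (by rw [hl k hk, hl i hi, h]))
    simp [Finsupp.single_apply, this]

lemma GSet_formula {σ : Finset (Fin r)} {i : Fin r} (hi : i ∈ σ) {m : Fin n → ℤ}
    (h1 : ∑ j, N i j * m j = 1) (h0 : ∀ k ∈ σ, k ≠ i → ∑ j, N k j * m j = 0)
    {μ : Fin r → ℂ} (hμ : μ ∈ GSet N) :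
    μ i = ∏ k ∈ σᶜ, μ k ^ (-∑ j, N k j * m j) := by
  have h := hμ.2 m
  rw [← Finset.prod_mul_prod_compl σ] at h
  have hs : ∏ k ∈ σ, μ k ^ (∑ j, N k j * m j) = μ i := by
    rw [Finset.prod_eq_single i]
    · rw [h1, zpow_one]
    · intro k hk hki; rw [h0 k hk hki, zpow_zero]
    · intro h; exact absurd hi h
  rw [hs] at h
  have : ∏ k ∈ σᶜ, μ k ^ (-∑ j, N k j * m j) = (∏ k ∈ σᶜ, μ k ^ (∑ j, N k j * m j))⁻¹ := by
    rw [← Finset.prod_inv_distrib]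
    exact Finset.prod_congr rfl fun k _ => zpow_neg _ _
  rw [this]
  exact eq_inv_of_mul_eq_one_left h

lemma zeroSet_mem {K : Set (Finset (Fin r))} {x : Fin r → ℂ} (hx : x ∈ UK K) :
    Finset.univ.filter (fun k => x k = 0) ∈ K := by
  by_contra h
  obtain ⟨i, hi, hne⟩ := mem_UK.1 hx _ h
  exact hne (Finset.mem_filter.1 hi).2

lemma continuous_mu (hPG : IsPrimGens F N) (hNS : F.NonSingular) {Z : Type*} [TopologicalSpace Z]
    {a b μ : Z → Fin r → ℂ} (ha : Continuous a) (hb : Continuous b) (haU : ∀ z, a z ∈ UK (KC F N))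
    (hμ : ∀ z, μ z ∈ GSet N) (hab : ∀ z k, μ z k * a z k = b z k) : Continuous μ := by
  rw [continuous_iff_continuousAt]
  intro z0
  have hσ := zeroSet_mem (haU z0)
  set σ := Finset.univ.filter (fun k => a z0 k = 0) with hσdef
  have hA : ∀ k, k ∉ σ → ContinuousAt (fun z => μ z k) z0 := by
    intro k hk
    have hne : a z0 k ≠ 0 := fun h => hk (by simp [hσdef, h])
    have ca : ContinuousAt (fun z => a z k) z0 := ((continuous_apply k).comp ha).continuousAt
    have cb : ContinuousAt (fun z => b z k) z0 := ((continuous_apply k).comp hb).continuousAt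
    refine (cb.div ca hne).congr ?_
    filter_upwards [ca.eventually_ne hne] with z hz
    rw [Pi.div_apply, ← hab, mul_div_cancel_right₀ _ hz]
  refine continuousAt_pi.2 fun i => ?_
  by_cases hi : i ∈ σ
  · obtain ⟨m, h1, h0⟩ := exists_dual hPG hNS hσ i hi
    have : (fun z => μ z i) = fun z => ∏ k ∈ σᶜ, μ z k ^ (-∑ j, N k j * m j) :=
      funext fun z => GSet_formula hi h1 h0 (hμ z)
    rw [this]
    refine tendsto_finsetProd _ fun k hk => ?_
    exact (hA k (by simpa using hk)).zpow₀ _ (Or.inl ((hμ z0).1 k))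
  · exact hA i hi

lemma mu_unique (hPG : IsPrimGens F N) (hNS : F.NonSingular) {x : Fin r → ℂ}
    (hx : x ∈ UK (KC F N)) {μ : Fin r → ℂ} (hμ : μ ∈ GSet N) (h : ∀ k, μ k * x k = x k) (i : Fin r) :
    μ i = 1 := by
  have hσ := zeroSet_mem hx
  set σ := Finset.univ.filter (fun k => x k = 0) with hσdef
  have hA : ∀ k, k ∉ σ → μ k = 1 := by
    intro k hk
    have hne : x k ≠ 0 := fun h => hk (by simp [hσdef, h])
    exact mul_right_cancel₀ hne (by rw [h, one_mul])
  by_cases hi : i ∈ σ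
  · obtain ⟨m, h1, h0⟩ := exists_dual hPG hNS hσ i hi
    rw [GSet_formula hi h1 h0 hμ]
    exact Finset.prod_eq_one fun k hk => by rw [hA k (by simpa using hk), one_zpow]
  · exact hA i hi

lemma GSet_one : (fun _ => 1 : Fin r → ℂ) ∈ GSet N := ⟨by simp, by simp⟩

lemma GSet_mul {μ ν : Fin r → ℂ} (hμ : μ ∈ GSet N) (hν : ν ∈ GSet N) :
    (fun k => μ k * ν k) ∈ GSet N :=
  ⟨fun k => mul_ne_zero (hμ.1 k) (hν.1 k), fun m => by
    simp only [mul_zpow, Finset.prod_mul_distrib, hμ.2 m, hν.2 m, mul_one]⟩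

lemma GSet_inv {μ : Fin r → ℂ} (hμ : μ ∈ GSet N) : (fun k => (μ k)⁻¹) ∈ GSet N :=
  ⟨fun k => inv_ne_zero (hμ.1 k), fun m => by
    simp only [inv_zpow, Finset.prod_inv_distrib, hμ.2 m, inv_one]⟩

lemma toricRel_equiv (K : Set (Finset (Fin r))) : Equivalence (toricRel N K) where
  refl x := ⟨_, GSet_one, by simp⟩
  symm := by
    rintro x y ⟨μ, hμ, h⟩
    refine ⟨_, GSet_inv hμ, ?_⟩
    rw [← h]; ext i; simp [hμ.1 i]
  trans := by
    rintro x y z ⟨μ, hμ, h⟩ ⟨ν, hν, h'⟩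
    refine ⟨_, GSet_mul hν hμ, ?_⟩
    rw [← h', ← h]; ext i; simp [mul_assoc]

lemma rel_of_qmap_eq {K : Set (Finset (Fin r))} {x y : ↥(UK K)} (h : qmap N K x = qmap N K y) :
    toricRel N K x y := by
  have := Quot.eqvGen_exact h
  rwa [(toricRel_equiv K).eqvGen_iff] at this

lemma prod_zpow_sum {z : ℂ} (hz : z ≠ 0) (e : Fin r → ℤ) (s : Finset (Fin r)) :
    ∏ k ∈ s, z ^ e k = z ^ ∑ k ∈ s, e k := by
  induction s using Finset.induction_on with
  | empty => simp
  | insert a s ha ih => rw [Finset.prod_insert ha, Finset.sum_insert ha, zpow_add₀ hz, ih]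

/-- `j0` is a lift. -/
theorem j0_isLift {K : Set (Finset (Fin r))} (hE : (∅ : Finset (Fin r)) ∈ K) {D : Fin r → ℕ}
    (hsum : ∑ k, (D k : ℤ) • N k = 0) : IsLiftOfID N K hE D (j0 hE D) := by
  intro f t
  refine Quot.sound ⟨fun k => ((t : ℂ) + Complex.I) ^ D k,
    ⟨fun k => pow_ne_zero _ (t_add_I_ne t), fun m => ?_⟩, ?_⟩
  · have e : ∀ k, (((t : ℂ) + Complex.I) ^ D k) ^ (∑ j, N k j * m j) =
        ((t : ℂ) + Complex.I) ^ ((D k : ℤ) * ∑ j, N k j * m j) := fun k => by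
      rw [zpow_mul, zpow_natCast]
    simp only [e]
    rw [prod_zpow_sum (t_add_I_ne t)]
    have : ∑ k, (D k : ℤ) * ∑ j, N k j * m j = 0 := by
      calc ∑ k, (D k : ℤ) * ∑ j, N k j * m j = ∑ j, (∑ k, (D k : ℤ) • N k) j * m j := by
            simp only [Finset.mul_sum, Finset.sum_apply, Finset.sum_mul]
            rw [Finset.sum_comm]
            refine Finset.sum_congr rfl fun j _ => Finset.sum_congr rfl fun k _ => ?_
            simp [mul_assoc]
        _ = 0 := by rw [hsum]; simp
    rw [this, zpow_zero]
  · ext k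
    simp only [j0_coe]
    exact mul_inv_cancel_left₀ (pow_ne_zero _ (t_add_I_ne t)) _

end toricgroup

section transfer
open unitInterval

lemma log_exists {A : Type*} [TopologicalSpace A] [PreconnectedSpace A] (a0 : A)
    (ν : A × OnePoint ℝ → ℂ) (hc : Continuous ν) (hne : ∀ z, ν z ≠ 0)
    (hinf : ∀ a, ν (a, OnePoint.infty) = 1) (h0 : ∀ p, ν (a0, p) = 1) :
    ∃ L : A × OnePoint ℝ → ℂ, Continuous L ∧ (∀ z, Complex.exp (L z) = ν z) ∧
      (∀ a, L (a, OnePoint.infty) = 0) ∧ ∀ p, L (a0, p) = 0 := by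
  have hpi := Real.pi_pos
  let par : I → ℝ := fun s => -(Real.pi / 2) + s * Real.pi
  have hpar : Continuous par := by fun_prop
  have cov := Complex.isCoveringMap_exp
  let H : C(I × A, {z : ℂ // z ≠ 0}) := ⟨fun z => ⟨ν (z.2, kap (par z.1)), hne _⟩, by
    refine Continuous.subtype_mk (hc.comp (continuous_snd.prodMk ?_)) _
    exact continuous_kap.comp (hpar.comp continuous_fst)⟩
  have hkA : kap (-(Real.pi / 2)) = OnePoint.infty := if_neg (by simp)
  have hkB : kap (Real.pi / 2) = OnePoint.infty := if_neg (by simp)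
  have par0 : par 0 = -(Real.pi / 2) := by simp [par]
  have par1 : par 1 = Real.pi / 2 := by simp [par]; ring
  let f : C(A, ℂ) := ContinuousMap.const _ 0
  have H_0 : ∀ a, H (0, a) = ⟨Complex.exp (f a), Complex.exp_ne_zero _⟩ := by
    intro a
    apply Subtype.ext
    simp [H, f, par0, hkA, hinf]
  let M := cov.liftHomotopy H f H_0
  have hM : ∀ s a, Complex.exp (M (s, a)) = ν (a, kap (par s)) := fun s a =>
    congrArg Subtype.val (congrFun (cov.liftHomotopy_lifts H f H_0) (s, a))
  have hM0 : ∀ a, M (0, a) = 0 := fun a => cov.liftHomotopy_zero H f H_0 a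
  have hMa0 : ∀ s, M (s, a0) = 0 := by
    intro s
    rw [← hM0 a0]
    refine cov.const_of_comp (g := fun s => M (s, a0))
      (M.continuous.comp (continuous_id.prodMk continuous_const)) ?_ s 0
    intro s s'
    apply Subtype.ext
    show Complex.exp (M (s, a0)) = Complex.exp (M (s', a0))
    rw [hM, hM, h0, h0]
  have hM1 : ∀ a, M (1, a) = 0 := by
    intro a
    rw [← hMa0 1]
    refine cov.const_of_comp (g := fun a => M (1, a))
      (M.continuous.comp (continuous_const.prodMk continuous_id)) ?_ a a0
    intro s s'
    apply Subtype.ext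
    show Complex.exp (M (1, s)) = Complex.exp (M (1, s'))
    rw [hM, hM, par1, hkB, hinf, hinf]
  let si : ℝ → I := fun θ => Set.projIcc 0 1 zero_le_one ((θ + Real.pi / 2) / Real.pi)
  have hsi : Continuous si := continuous_projIcc.comp (by fun_prop)
  have hps : ∀ θ ∈ Set.Icc (-(Real.pi / 2)) (Real.pi / 2), par (si θ) = θ := by
    intro θ hθ
    have : (θ + Real.pi / 2) / Real.pi ∈ Set.Icc (0 : ℝ) 1 := by
      constructor
      · exact div_nonneg (by linarith [hθ.1]) hpi.le
      · rw [div_le_one hpi]; linarith [hθ.2]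
    simp only [par, si]
    rw [Set.projIcc_of_mem zero_le_one this]
    field_simp; ring
  have hsB : si (Real.pi / 2) = 1 := Set.projIcc_of_right_le _ (by rw [le_div_iff₀ hpi]; linarith)
  have hsA : si (-(Real.pi / 2)) = 0 := Set.projIcc_of_le_left _ (by simp)
  refine ⟨fun z => M (si (sec z.2), z.1), ?_, ?_, ?_, ?_⟩
  · apply continuous_of_kap
    have : (fun p : A × Set.Icc (-(Real.pi / 2)) (Real.pi / 2) => M (si (sec (kap p.2)), p.1)) =
        fun p => M (si p.2, p.1) := by
      ext ⟨a, θ, hθ⟩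
      simp only
      rcases hθ.1.eq_or_lt with h1 | h1
      · subst h1
        rw [hkA, sec_infty, hsB, hsA, hM0, hM1]
      · rcases hθ.2.eq_or_lt with h2 | h2
        · rw [h2, hkB, sec_infty]
        · rw [kap_of h1 h2, sec_coe, Real.arctan_tan h1 h2]
    exact this ▸ M.continuous.comp (((hsi.comp continuous_subtype_val).comp continuous_snd).prodMk
      continuous_fst)
  · rintro ⟨a, p⟩
    simp only
    rw [hM, hps _ (sec_mem p), kap_sec]
  · intro a
    simp only [sec_infty, hsB, hM1]
  · intro p
    exact hMa0 _

variable {r : ℕ} {K : Set (Finset (Fin r))} {D : Fin r → ℕ}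

lemma exists_twist (hE : (∅ : Finset (Fin r)) ∈ K) {X : Type*} [TopologicalSpace X]
    (γ : C(X, Loop ↥(UK K) (onesUK hE))) (c : X × OnePoint ℝ → Fin r → ℂ) (hc : Continuous c)
    (hne : ∀ z k, c z k ≠ 0) (hinf : ∀ x k, c (x, OnePoint.infty) k = 1) :
    ∃ G : C(X, Loop ↥(UK K) (onesUK hE)),
      ∀ x p k, ((G x).1 p).1 k = c (x, p) k * ((γ x).1 p).1 k := by
  have hcon : Continuous fun z : X × OnePoint ℝ => (fun k => c z k * ((γ z.1).1 z.2).1 k) := by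
    refine continuous_pi fun k => ((continuous_apply k).comp hc).mul ?_
    exact (continuous_apply k).comp ((continuous_loop_eval hE).comp
      ((γ.continuous.comp continuous_fst).prodMk continuous_snd))
  let G0 : C(X × OnePoint ℝ, ↥(UK K)) :=
    ⟨fun z => ⟨fun k => c z k * ((γ z.1).1 z.2).1 k, UK_smul ((γ z.1).1 z.2).2 (hne z)⟩,
      hcon.subtype_mk _⟩
  have hG : ∀ x, G0.curry x OnePoint.infty = onesUK hE := by
    intro x
    apply Subtype.ext
    ext k
    show c (x, OnePoint.infty) k * ((γ x).1 OnePoint.infty).1 k = 1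
    rw [hinf, loop_infty, one_mul]
  exact ⟨⟨fun x => ⟨G0.curry x, hG x⟩, G0.curry.continuous.subtype_mk hG⟩, fun x p k => rfl⟩

variable {k : ℕ} {X Y : Type*} [TopologicalSpace X] [TopologicalSpace Y]

lemma homotopicRel_comp_right {j j' : C(X, Y)} {x : X} (h : j.HomotopicRel j' {x})
    (g : C(Fin k → I, X)) (hg : ∀ y ∈ Cube.boundary (Fin k), g y = x) :
    (j.comp g).HomotopicRel (j'.comp g) (Cube.boundary (Fin k)) := by
  obtain ⟨H⟩ := h
  refine ⟨⟨⟨⟨fun z => H (z.1, g z.2), H.continuous.comp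
    (continuous_fst.prodMk (g.continuous.comp continuous_snd))⟩, ?_, ?_⟩, ?_⟩⟩
  · intro y; exact H.apply_zero _
  · intro y; exact H.apply_one _
  · intro s y hy; exact H.eq_fst s (hg y hy)

lemma rawSurj_of_homotopic {j j' : C(X, Y)} {x : X} (h : j.HomotopicRel j' {x})
    (hs : RawSurj j' x k) : RawSurj j x k := by
  intro p hp
  have hx : j x = j' x := by
    obtain ⟨H⟩ := h
    exact (H.eq_fst 1 rfl).symm.trans (H.eq_snd 1 rfl)
  obtain ⟨g, hg, hh⟩ := hs p (fun y hy => (hp y hy).trans hx)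
  exact ⟨g, hg, (homotopicRel_comp_right h g hg).trans hh⟩

lemma rawInj_of_homotopic {j j' : C(X, Y)} {x : X} (h : j.HomotopicRel j' {x})
    (hs : RawInj j' x k) : RawInj j x k := by
  intro p0 p1 h0 h1 hh
  exact hs p0 p1 h0 h1 ((homotopicRel_comp_right h p0 h0).symm.trans
    (hh.trans (homotopicRel_comp_right h p1 h1)))

lemma rawSurj_comp {j : C(X, Y)} {x : X} (T T' : C(Y, Y)) (h1 : T.comp T' = ContinuousMap.id Y)
    (h2 : T'.comp T = ContinuousMap.id Y) (hs : RawSurj j x k) : RawSurj (T.comp j) x k := by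
  intro p hp
  obtain ⟨g, hg, ⟨H⟩⟩ := hs (T'.comp p) (fun y hy => by
    rw [ContinuousMap.comp_apply, hp y hy]; exact DFunLike.congr_fun h2 (j x))
  refine ⟨g, hg, ?_⟩
  have : T.comp (T'.comp p) = p := by rw [← ContinuousMap.comp_assoc, h1, ContinuousMap.id_comp]
  rw [← this]
  exact ⟨H.compContinuousMap T⟩

lemma rawInj_comp {j : C(X, Y)} {x : X} (T T' : C(Y, Y))
    (h2 : T'.comp T = ContinuousMap.id Y) (hs : RawInj j x k) : RawInj (T.comp j) x k := by
  rintro p0 p1 h0 h1 ⟨H⟩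
  refine hs p0 p1 h0 h1 ?_
  have : ∀ p, T'.comp ((T.comp j).comp p) = j.comp p := fun p : C(Fin k → I, X) => by
    ext y; exact DFunLike.congr_fun h2 (j (p y))
  rw [← this p0, ← this p1]
  exact ⟨H.compContinuousMap T'⟩

end transfer

section final
variable {r : ℕ} {K : Set (Finset (Fin r))} {D : Fin r → ℕ}

lemma finite_re_roots {d : ℕ} (a : Fin d → ℂ) :
    {t : ℝ | ((toPoly a).eval (t : ℂ)).re = 0}.Finite := by
  let P : Polynomial ℝ := Polynomial.X ^ d + ∑ l : Fin d, Polynomial.C (a l).re * Polynomial.X ^ (l : ℕ)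
  have hm : P.Monic := by
    apply Polynomial.monic_X_pow_add
    refine (Polynomial.degree_sum_le _ _).trans_lt ?_
    rw [Finset.sup_lt_iff (by exact WithBot.bot_lt_coe d)]
    intro l _
    exact (Polynomial.degree_C_mul_X_pow_le _ _).trans_lt (by exact_mod_cast l.2)
  refine (Polynomial.finite_setOf_isRoot hm.ne_zero).subset fun t ht => ?_
  show P.eval t = 0
  rw [Set.mem_setOf_eq, toPoly_eval] at ht
  rw [← ht]
  simp only [P, Polynomial.eval_add, Polynomial.eval_pow, Polynomial.eval_X,
    Polynomial.eval_finsetSum, Polynomial.eval_mul, Polynomial.eval_C, Complex.add_re,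
    Complex.re_sum, ← Complex.ofReal_pow, Complex.re_mul_ofReal, Complex.ofReal_re]

/-- Tuples of polynomials without real roots. -/
def RF (D : Fin r → ℕ) : Set (∀ k : Fin r, Fin (D k) → ℂ) :=
  {a | ∀ k, ∀ t : ℝ, (toPoly (a k)).eval (t : ℂ) ≠ 0}

lemma RF_sub (hE : (∅ : Finset (Fin r)) ∈ K) : RF D ⊆ PolSp K D := by
  intro a ha σ hσ t
  obtain ⟨i, hi⟩ := Finset.nonempty_iff_ne_empty.2 (fun he : σ = ∅ => hσ (by rw [he]; exact hE))
  exact ⟨i, hi, ha i t⟩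

/-- Adding constants to the constant coefficients. -/
def shift (D : Fin r → ℕ) (c : ℂ) : ∀ k : Fin r, Fin (D k) → ℂ := fun _ l => if (l : ℕ) = 0 then c else 0

lemma shift_eval (hD : ∀ k, 0 < D k) (a : ∀ k : Fin r, Fin (D k) → ℂ) (c : ℂ) (k : Fin r) (z : ℂ) :
    (toPoly ((a + shift D c) k)).eval z = (toPoly (a k)).eval z + c := by
  rw [toPoly_eval, toPoly_eval]
  simp only [Pi.add_apply, shift, add_mul, Finset.sum_add_distrib]
  rw [Finset.sum_eq_single (⟨0, hD k⟩ : Fin (D k)) (f := fun l : Fin (D k) =>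
    (if (l : ℕ) = 0 then c else 0) * z ^ (l : ℕ))]
  · simp [add_assoc]
  · intro l _ hl
    have : (l : ℕ) ≠ 0 := fun h => hl (Fin.ext h)
    simp [this]
  · simp

lemma exists_good_shift (hD : ∀ k, 0 < D k) (a : ∀ k : Fin r, Fin (D k) → ℂ) :
    ∃ s : ℝ, 0 < s ∧ ∀ s', 0 < s' → s' ≤ s → a + shift D (s' * Complex.I) ∈ RF D := by
  let B : Set ℝ := ⋃ k, (fun t : ℝ => -((toPoly (a k)).eval (t : ℂ)).im) ''
    {t : ℝ | ((toPoly (a k)).eval (t : ℂ)).re = 0}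
  have hB : B.Finite := Set.finite_iUnion fun k => (finite_re_roots (a k)).image _
  have hcl : IsClosed (B \ {0}) := (hB.subset Set.diff_subset).isClosed
  have h0 : (B \ {0})ᶜ ∈ nhds (0 : ℝ) := hcl.isOpen_compl.mem_nhds (by simp)
  obtain ⟨ε, hε, hball⟩ := Metric.mem_nhds_iff.1 h0
  refine ⟨ε / 2, by linarith, fun s' h1 h2 k t hz => ?_⟩
  rw [shift_eval hD] at hz
  have hmem : s' ∈ Metric.ball (0 : ℝ) ε := by
    rw [Metric.mem_ball, Real.dist_eq, sub_zero, abs_of_pos h1]; linarith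
  refine hball hmem ⟨Set.mem_iUnion.2 ⟨k, t, ?_, ?_⟩, by simpa using h1.ne'⟩
  · simpa using congrArg Complex.re hz
  · have := congrArg Complex.im hz
    simp at this
    show -_ = s'
    linarith

lemma two_le_card (hr : 2 ≤ rmin K) {σ : Finset (Fin r)} (hσ : σ ∉ K) : 2 ≤ σ.card :=
  hr.trans (rmin_le_card hσ)

lemma joinedIn_update (hr : 2 ≤ rmin K) {a b : ∀ k : Fin r, Fin (D k) → ℂ} (i : Fin r)
    (ha : ∀ k ≠ i, ∀ t : ℝ, (toPoly (a k)).eval (t : ℂ) ≠ 0) (hab : ∀ k ≠ i, b k = a k) :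
    JoinedIn (PolSp K D) a b := by
  apply JoinedIn.of_segment_subset
  rintro c ⟨u, v, hu, hv, huv, rfl⟩ σ hσ t
  obtain ⟨k, hk, hki⟩ := Finset.exists_mem_ne (s := σ) (two_le_card hr hσ) i
  refine ⟨k, hk, ?_⟩
  have : (u • a + v • b) k = a k := by
    simp only [Pi.add_apply, Pi.smul_apply]
    rw [hab k hki, ← add_smul, huv, one_smul]
  rw [this]
  exact ha k hki t

lemma joinedIn_RF (hr : 2 ≤ rmin K) (hE : (∅ : Finset (Fin r)) ∈ K)
    {a b : ∀ k : Fin r, Fin (D k) → ℂ} (ha : a ∈ RF D) (hb : b ∈ RF D) :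
    JoinedIn (PolSp K D) a b := by
  have key : ∀ S : Finset (Fin r), JoinedIn (PolSp K D) a (S.piecewise b a) := by
    intro S
    induction S using Finset.induction_on with
    | empty => simpa using JoinedIn.refl (RF_sub hE ha)
    | insert i S hi ih =>
      refine ih.trans (joinedIn_update hr i (fun k hk t => ?_) fun k hk => ?_)
      · by_cases h : k ∈ S
        · rw [Finset.piecewise_eq_of_mem _ _ _ h]; exact hb k t
        · rw [Finset.piecewise_eq_of_notMem _ _ _ h]; exact ha k t
      · by_cases h : k ∈ S <;> simp [Finset.piecewise, h, hk]
  simpa using key Finset.univ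

lemma joinedIn_shift (hD : ∀ k, 0 < D k) (hE : (∅ : Finset (Fin r)) ∈ K)
    {a : ∀ k : Fin r, Fin (D k) → ℂ} (ha : a ∈ PolSp K D) :
    ∃ b ∈ RF D, JoinedIn (PolSp K D) a b := by
  obtain ⟨s, hs, h⟩ := exists_good_shift hD a
  refine ⟨_, h s hs le_rfl, ?_⟩
  apply JoinedIn.of_segment_subset
  rw [segment_eq_image']
  rintro c ⟨θ, hθ, rfl⟩
  have e : a + θ • (a + shift D (s * Complex.I) - a) = a + shift D ((θ * s : ℝ) * Complex.I) := by
    ext k l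
    by_cases hl : (l : ℕ) = 0 <;> simp [shift, hl, mul_assoc]
  simp only [e]
  rcases hθ.1.eq_or_lt with h0 | h0
  · have : a + shift D ((θ * s : ℝ) * Complex.I) = a := by
      ext k l; simp [shift, ← h0]
    rw [this]; exact ha
  · exact RF_sub hE (h _ (by positivity) (by nlinarith [hθ.2]))

lemma pol_preconnected (hr : 2 ≤ rmin K) (hD : ∀ k, 0 < D k) (hE : (∅ : Finset (Fin r)) ∈ K) :
    PreconnectedSpace ↥(PolSp K D) := by
  rw [← isPreconnected_iff_preconnectedSpace]
  obtain ⟨s, hs, h⟩ := exists_good_shift hD (0 : ∀ k : Fin r, Fin (D k) → ℂ)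
  have hb := h s hs le_rfl
  have : IsPathConnected (PolSp K D) := by
    refine ⟨_, RF_sub hE hb, fun {a} ha => ?_⟩
    obtain ⟨b, hb', hj⟩ := joinedIn_shift hD hE ha
    exact (joinedIn_RF hr hE hb hb').trans hj.symm
  exact this.isConnected.isPreconnected

lemma dims {k : ℕ} (h : (k : ℤ) ≤ dBound K D) :
    2 ≤ rmin K ∧ k + 1 < dmin D * (2 * rmin K - 2) := by
  unfold dBound at h
  have h1 : (1 : ℤ) ≤ ((rmin K : ℤ) - 1) * (dmin D : ℤ) := by
    have : (0 : ℤ) ≤ k := Int.natCast_nonneg k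
    nlinarith
  have h2 : 2 ≤ rmin K := by
    by_contra hc
    have : (rmin K : ℤ) - 1 ≤ 0 := by omega
    have hd : (0 : ℤ) ≤ dmin D := Int.natCast_nonneg _
    nlinarith [mul_nonneg hd (neg_nonneg.2 this)]
  refine ⟨h2, ?_⟩
  have e : ((dmin D * (2 * rmin K - 2) : ℕ) : ℤ) = 2 * ((rmin K : ℤ) - 1) * (dmin D : ℤ) := by
    rw [Nat.cast_mul, Nat.cast_sub (by omega)]; push_cast; ring
  have h3 : ((k + 1 : ℕ) : ℤ) < ((dmin D * (2 * rmin K - 2) : ℕ) : ℤ) := by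
    rw [e]; push_cast; linarith
  exact_mod_cast h3

theorem main_lift {n : ℕ} (F : Fan n) (N : Fin r → Fin n → ℤ)
    (hPG : IsPrimGens F N) (hNS : F.NonSingular)
    (hE : (∅ : Finset (Fin r)) ∈ KC F N) (hD : ∀ k, 0 < D k)
    (hsum : ∑ k, (D k : ℤ) • N k = 0)
    (j : C(↥(PolSp (KC F N) D), Loop ↥(UK (KC F N)) (onesUK hE)))
    (hj : IsLiftOfID N (KC F N) hE D ⇑j) : HomotopyEquivThrough j (dBound (KC F N) D) := by
  intro f0 q hq
  obtain ⟨hr, hdim⟩ := dims hq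
  have hpre := pol_preconnected (D := D) hr hD hE
  -- the comparison factor
  have hex : ∀ z : ↥(PolSp (KC F N) D) × OnePoint ℝ, ∃ μ ∈ GSet N,
      ∀ k, μ k * ((j0 hE D z.1).1 z.2).1 k = ((j z.1).1 z.2).1 k := by
    rintro ⟨f, p⟩
    induction p using OnePoint.rec with
    | infty => exact ⟨_, GSet_one, fun k => by simp only [loop_infty, mul_one]⟩
    | coe t =>
      obtain ⟨μ, hμ, h⟩ := rel_of_qmap_eq (((j0_isLift hE hsum) f t).trans (hj f t).symm)
      exact ⟨μ, hμ, fun k => congrFun h k⟩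
  choose μ hμG hμ using hex
  have ca : Continuous fun z : ↥(PolSp (KC F N) D) × OnePoint ℝ => ((j0 hE D z.1).1 z.2).1 :=
    (continuous_loop_eval hE).comp (((j0 hE D).continuous.comp continuous_fst).prodMk continuous_snd)
  have cb : Continuous fun z : ↥(PolSp (KC F N) D) × OnePoint ℝ => ((j z.1).1 z.2).1 :=
    (continuous_loop_eval hE).comp ((j.continuous.comp continuous_fst).prodMk continuous_snd)
  have cμ : Continuous μ := continuous_mu hPG hNS ca cb (fun z => ((j0 hE D z.1).1 z.2).2) hμG hμ
  have cμk : ∀ k, Continuous fun z => μ z k := fun k => (continuous_apply k).comp cμ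
  have hμne : ∀ z k, μ z k ≠ 0 := fun z => (hμG z).1
  have hμinf : ∀ f k, μ (f, OnePoint.infty) k = 1 := by
    intro f k
    have := hμ (f, OnePoint.infty) k
    simpa only [loop_infty, mul_one] using this
  have cμ0 : Continuous fun p : OnePoint ℝ => μ (f0, p) :=
    cμ.comp (continuous_const.prodMk continuous_id)
  have cμ0k : ∀ k, Continuous fun p : OnePoint ℝ => μ (f0, p) k :=
    fun k => (continuous_apply k).comp cμ0
  -- logarithms
  have hlog := fun k => log_exists f0 (fun z : ↥(PolSp (KC F N) D) × OnePoint ℝ =>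
      μ z k / μ (f0, z.2) k)
    ((cμk k).div ((cμ0k k).comp continuous_snd) (fun z => hμne _ _))
    (fun z => div_ne_zero (hμne _ _) (hμne _ _)) (fun f => by simp only [hμinf, div_one])
    (fun p => div_self (hμne _ _))
  choose L hLc hLe hLinf hL0 using hlog
  -- the twisting maps
  obtain ⟨T, hT⟩ := exists_twist hE (ContinuousMap.id (Loop ↥(UK (KC F N)) (onesUK hE)))
    (fun z => μ (f0, z.2)) (cμ0.comp continuous_snd) (fun z => hμne _) (fun _ => hμinf f0)
  obtain ⟨T', hT'⟩ := exists_twist hE (ContinuousMap.id (Loop ↥(UK (KC F N)) (onesUK hE)))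
    (fun z k => (μ (f0, z.2) k)⁻¹)
    (continuous_pi fun k => ((cμ0k k).comp continuous_snd).inv₀ fun z => hμne _ _)
    (fun z k => inv_ne_zero (hμne _ k)) (fun _ k => by simp only [hμinf, inv_one])
  have hTT' : T.comp T' = ContinuousMap.id _ := by
    ext γ
    refine loop_ext fun p => ?_
    ext k
    rw [ContinuousMap.comp_apply, hT]
    simp only [ContinuousMap.id_apply]
    rw [hT']
    exact mul_inv_cancel_left₀ (hμne _ _) _
  have hT'T : T'.comp T = ContinuousMap.id _ := by
    ext γ
    refine loop_ext fun p => ?_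
    ext k
    rw [ContinuousMap.comp_apply, hT']
    simp only [ContinuousMap.id_apply]
    rw [hT]
    exact inv_mul_cancel_left₀ (hμne _ _) _
  -- the homotopy
  obtain ⟨H, hH⟩ := exists_twist (X := unitInterval × ↥(PolSp (KC F N) D)) hE
    (j.comp ⟨Prod.snd, continuous_snd⟩)
    (fun z k => Complex.exp (-((z.1.1 : ℝ) : ℂ) * L k (z.1.2, z.2)))
    (by
      refine continuous_pi fun k => Complex.continuous_exp.comp (Continuous.mul ?_ ?_)
      · exact (Complex.continuous_ofReal.comp (continuous_subtype_val.comp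
          (continuous_fst.comp continuous_fst))).neg
      · exact (hLc k).comp ((continuous_snd.comp continuous_fst).prodMk continuous_snd))
    (fun z k => Complex.exp_ne_zero _) (fun x k => by simp only [hLinf, mul_zero, Complex.exp_zero])
  have hhom : j.HomotopicRel (T.comp (j0 hE D)) {f0} := by
    refine ⟨⟨⟨H, ?_, ?_⟩, ?_⟩⟩
    · intro f
      refine loop_ext fun p => ?_
      ext k
      refine (hH _ _ _).trans ?_
      simp
    · intro f
      refine loop_ext fun p => ?_
      ext k
      refine (hH _ _ _).trans (Eq.trans ?_ (hT (j0 hE D f) p k).symm)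
      show Complex.exp (-((((1 : unitInterval) : ℝ)) : ℂ) * L k (f, p)) * ((j f).1 p).1 k
        = μ (f0, p) k * ((j0 hE D f).1 p).1 k
      rw [← hμ (f, p) k]
      simp only [Set.Icc.coe_one, Complex.ofReal_one, neg_mul, one_mul, Complex.exp_neg, hLe]
      rw [inv_div, ← mul_assoc, div_mul_cancel₀ _ (hμne _ _)]
    · intro s f hf
      rw [Set.mem_singleton_iff] at hf
      subst hf
      refine loop_ext fun p => ?_
      ext k
      refine (hH _ _ _).trans ?_
      simp [hL0]
  exact bijective_piMap j f0 q
    (rawSurj_of_homotopic hhom (rawSurj_comp T T' hTT' hT'T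
      (rawSurj_j0 hr hE (by omega) f0)))
    (rawInj_of_homotopic hhom (rawInj_comp T T' hT'T (rawInj_j0 hr hE hdim f0)))

end final

/-- Let `Σ` be a non-singular fan in `ℝ^n` satisfying conditions (2.9.1)
and (2.9.2), and let `D` be an `r`-tuple of positive integers with `∑ d_k n_k = 0`.
Then the map `i_D : Pol*_D(S¹, X_Σ) → Ω X_Σ` admits a continuous lift
`j_D : Pol*_D(S¹, X_Σ) → Ω U(K_Σ)` with `(Ω q_Σ) ∘ j_D = i_D`, and every such lift is a
homotopy equivalence through dimension `d(D,Σ) = 2(r_min(Σ) − 1) d_min − 2`. -/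
theorem polSpace_lift_exists_and_homotopyEquiv_through
    {n r : ℕ} (F : Fan n) (N : Fin r → Fin n → ℤ)
    (hPG : IsPrimGens F N) (hNS : F.NonSingular)
    (h1 : Cond1 N) (h2 : Cond2 N)
    (D : Fin r → ℕ) (hD : ∀ k, 0 < D k)
    (hsum : ∑ k, (D k : ℤ) • N k = 0) :
    (∃ j : C(↥(PolSp (KC F N) D), Loop ↥(UK (KC F N)) (onesUK (empty_mem_KC F N))),
        IsLiftOfID N (KC F N) (empty_mem_KC F N) D ⇑j) ∧
      ∀ j : C(↥(PolSp (KC F N) D), Loop ↥(UK (KC F N)) (onesUK (empty_mem_KC F N))),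
        IsLiftOfID N (KC F N) (empty_mem_KC F N) D ⇑j →
          HomotopyEquivThrough j (dBound (KC F N) D) := by
  exact ⟨⟨j0 _ D, j0_isLift _ hsum⟩, fun j hj => main_lift F N hPG hNS _ hD hsum j hj⟩

end Toric
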